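/- arXiv:2106.05821 — 4 statements merged into one kernel-verified Lean document; each statement's English description precedes it below -/
import Mathlib

section
/- Let G be a group containing a free subgroup F of finite index, let A and B be subgroups of G, and let S be a system of representatives of the double cosets AsB in G (i.e., the map s ↦ AsB is a bijection from S onto the set of (A,B)-double cosets of G). Then the sum over s ∈ S of the virtual reduced ranks of the subgroups A ∩ sBs⁻¹ satisfies ∑_{s∈S} r̄k(A ∩ sBs⁻¹) ≤ [G:F] · r̄k(A) · r̄k(B). -/
open scoped ENNReal

/-- The rank of a group `H` (as an element of `ℝ≥0∞`): the minimal cardinality of a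
finite generating set of `H`, or `⊤` if `H` is not finitely generated. -/
noncomputable def grank (H : Type*) [Group H] : ℝ≥0∞ :=
  sInf {x : ℝ≥0∞ | ∃ s : Finset H, Subgroup.closure (s : Set H) = ⊤ ∧ x = s.card}

/-- `r : ℝ≥0∞` is the virtual reduced rank of the group `H`: there is a finitely
generated free subgroup `K` of finite index in `H` such that
`r = max (0, rank K - 1) / [H : K]`.  (This value does not depend on the choice of `K`.) -/
def IsVirtRedRank (H : Type*) [Group H] (r : ℝ≥0∞) : Prop :=
  ∃ K : Subgroup H, K.FiniteIndex ∧ IsFreeGroup K ∧ Group.FG K ∧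
    r = (grank K - 1) / (K.index : ℝ≥0∞)

namespace HannaNeumann

section Graph

variable {V E V' E' : Type*}

/-- `u` and `v` are joined by a path using only the edges in `D`. -/
def Conn (s t : E → V) (D : Set E) : V → V → Prop :=
  Relation.EqvGen fun u v => ∃ f ∈ D, s f = u ∧ t f = v

/-- The set of vertices joined to `v` by a path using only the edges in `D`. -/
def component (s t : E → V) (D : Set E) (v : V) : Set V := {w | Conn s t D v w}

variable {s t : E → V} {D D' : Set E} {u v w : V}

theorem Conn.refl (v : V) : Conn s t D v v := Relation.EqvGen.refl v

theorem Conn.symm (h : Conn s t D u v) : Conn s t D v u := Relation.EqvGen.symm _ _ h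

theorem Conn.trans (h : Conn s t D u v) (h' : Conn s t D v w) : Conn s t D u w :=
  Relation.EqvGen.trans _ _ _ h h'

theorem Conn.edge {f : E} (hf : f ∈ D) : Conn s t D (s f) (t f) :=
  Relation.EqvGen.rel _ _ ⟨f, hf, rfl, rfl⟩

theorem Conn.map {s' t' : E' → V'} {C : Set E'} {φ : V → V'} {ψ : E → E'}
    (hs : ∀ e ∈ D, s' (ψ e) = φ (s e)) (ht : ∀ e ∈ D, t' (ψ e) = φ (t e))
    (hD : ∀ e ∈ D, ψ e ∈ C) (h : Conn s t D u v) : Conn s' t' C (φ u) (φ v) := by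
  induction h with
  | rel x y h =>
    obtain ⟨f, hf, rfl, rfl⟩ := h
    rw [← hs f hf, ← ht f hf]
    exact Conn.edge (hD f hf)
  | refl x => exact Conn.refl _
  | symm x y _ ih => exact ih.symm
  | trans x y z _ _ ih ih' => exact ih.trans ih'

theorem Conn.mono (hD : D ⊆ D') (h : Conn s t D u v) : Conn s t D' u v :=
  Conn.map (φ := id) (ψ := id) (fun _ _ => rfl) (fun _ _ => rfl) hD h

theorem Conn.apply_eq {β : Type*} {g : V → β} (hg : ∀ e ∈ D, g (s e) = g (t e))
    (h : Conn s t D u v) : g u = g v := by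
  induction h with
  | rel x y h =>
    obtain ⟨f, hf, rfl, rfl⟩ := h
    exact hg f hf
  | refl x => rfl
  | symm x y _ ih => exact ih.symm
  | trans x y z _ _ ih ih' => exact ih.trans ih'

theorem self_mem_component (v : V) : v ∈ component s t D v := Conn.refl v

theorem component_mono (hD : D ⊆ D') : component s t D v ⊆ component s t D' v :=
  fun _ h => Conn.mono hD h

theorem Conn.component_eq (h : Conn s t D u v) : component s t D u = component s t D v :=
  Set.ext fun _ => ⟨fun h' => h.symm.trans h', fun h' => h.trans h'⟩

theorem component_subset {W : Set V} (hv : v ∈ W) (hW : ∀ e ∈ D, s e ∈ W ↔ t e ∈ W) :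
    component s t D v ⊆ W := fun _ h =>
  (Conn.apply_eq (g := (· ∈ W)) (fun e he => propext (hW e he)) h).mp hv

theorem mem_component_iff {e : E} (he : e ∈ D) :
    s e ∈ component s t D v ↔ t e ∈ component s t D v :=
  ⟨fun h => Conn.trans h (Conn.edge he), fun h => Conn.trans h (Conn.edge he).symm⟩

/-- The graph with edges `E` has no cycles, expressed by the vanishing of its first cohomology. -/
def Acyclic (s t : E → V) : Prop := ∀ c : E → ℚ, ∃ f : V → ℚ, ∀ e, f (t e) = f (s e) + c e

theorem Acyclic.restrict {s' t' : E' → V'} (h : Acyclic s t) (φ : V' → V) (ψ : E' → E)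
    (hψ : Function.Injective ψ) (hs : ∀ e, s (ψ e) = φ (s' e)) (ht : ∀ e, t (ψ e) = φ (t' e)) :
    Acyclic s' t' := fun c => by
  obtain ⟨f, hf⟩ := h (Function.extend ψ c 0)
  refine ⟨f ∘ φ, fun e => ?_⟩
  have := hf (ψ e)
  rwa [hs, ht, hψ.extend_apply] at this

/-- A finite tree has one more vertex than edges. -/
theorem Acyclic.ncard_add_one (h : Acyclic s t) {W : Set V} (hW : W.Finite) (hD : D.Finite)
    (hs : ∀ e ∈ D, s e ∈ W) (ht : ∀ e ∈ D, t e ∈ W) {r : V} (hr : r ∈ W)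
    (hconn : ∀ w ∈ W, Conn s t D r w) : D.ncard + 1 = W.ncard := by
  have := hW.to_subtype
  have := hD.to_subtype
  have := Fintype.ofFinite W
  have := Fintype.ofFinite D
  let L : (W → ℚ) →ₗ[ℚ] (D → ℚ) × ℚ :=
    { toFun := fun f => (fun e => f ⟨t e, ht e e.2⟩ - f ⟨s e, hs e e.2⟩, f ⟨r, hr⟩)
      map_add' := fun f g => by
        ext <;> simp
        ring
      map_smul' := fun c f => by
        ext <;> simp
        ring }
  have hinj : Function.Injective L := by
    rw [injective_iff_map_eq_zero]
    intro f hf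
    classical
    let g : V → ℚ := fun v => if hv : v ∈ W then f ⟨v, hv⟩ else 0
    have hg : ∀ e ∈ D, g (s e) = g (t e) := fun e he => by
      have := congrFun (congrArg Prod.fst hf) ⟨e, he⟩
      simp only [L, LinearMap.coe_mk, AddHom.coe_mk, Prod.fst_zero, Pi.zero_apply] at this
      simp only [g, hs e he, ht e he, dite_true]
      linarith
    have h0 : f ⟨r, hr⟩ = 0 := congrArg Prod.snd hf
    ext ⟨w, hw⟩
    have := (hconn w hw).apply_eq hg
    simp only [g, hr, hw, dite_true, h0] at this
    simp [← this]
  have hsurj : Function.Surjective L := by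
    rintro ⟨c, x⟩
    obtain ⟨f, hf⟩ := h (Function.extend Subtype.val c 0)
    refine ⟨fun w => f w - f r + x, ?_⟩
    ext e
    · have := hf e
      rw [Subtype.val_injective.extend_apply] at this
      simp [L, this]
    · simp [L]
  have := (LinearEquiv.ofBijective L ⟨hinj, hsurj⟩).finrank_eq
  simp only [Module.finrank_prod, Module.finrank_fintype_fun_eq_card, Module.finrank_self] at this
  rw [Set.ncard_eq_toFinset_card', Set.ncard_eq_toFinset_card', Set.toFinset_card,
    Set.toFinset_card]
  omega

end Graph

section OrbitCount

variable {A X : Type*} [Group A] [MulAction A X]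

/-- The number of orbits of `A` meeting `U`. -/
noncomputable def orbitCount (A : Type*) {X : Type*} [Group A] [MulAction A X] (U : Set X) : ℕ∞ :=
  ((fun x : X => (Quotient.mk'' x : MulAction.orbitRel.Quotient A X)) '' U).encard

theorem mk_eq_mk_iff {x y : X} :
    (Quotient.mk'' x : MulAction.orbitRel.Quotient A X) = Quotient.mk'' y ↔ ∃ a : A, a • y = x := by
  rw [Quotient.eq'']
  rfl

/-- The chosen representatives of the orbits of `A`. -/
def orbitReps (A X : Type*) [Group A] [MulAction A X] : Set X :=
  {x | (Quotient.mk'' x : MulAction.orbitRel.Quotient A X).out = x}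

theorem exists_smul_mem_orbitReps (x : X) : ∃ a : A, a • x ∈ orbitReps A X := by
  obtain ⟨a, ha⟩ := mk_eq_mk_iff.mp
    (Quotient.out_eq' (Quotient.mk'' x : MulAction.orbitRel.Quotient A X))
  refine ⟨a, ?_⟩
  have h : (Quotient.mk'' (a • x) : MulAction.orbitRel.Quotient A X) = Quotient.mk'' x :=
    mk_eq_mk_iff.mpr ⟨a, rfl⟩
  rw [orbitReps, Set.mem_ofPred_eq, h, ha]

theorem smul_eq_self_of_mem_orbitReps {x : X} {a : A} (hx : x ∈ orbitReps A X)
    (hax : a • x ∈ orbitReps A X) : a • x = x := by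
  have h : (Quotient.mk'' (a • x) : MulAction.orbitRel.Quotient A X) = Quotient.mk'' x :=
    mk_eq_mk_iff.mpr ⟨a, rfl⟩
  rw [orbitReps, Set.mem_ofPred_eq] at hx hax
  rw [← hax, h, hx]

/-- Orbits are counted by the points lying over a set of representatives of a free `A`-set. -/
theorem orbitCount_eq_encard {P : Type*} [MulAction A P]
    (hfree : ∀ (a : A) (p : P), a • p = p → a = 1)
    {U : Set X} (hU : ∀ (a : A), ∀ x ∈ U, a • x ∈ U) (π : X → P)
    (hπ : ∀ (a : A), ∀ x ∈ U, π (a • x) = a • π x) :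
    orbitCount A U = {x ∈ U | π x ∈ orbitReps A P}.encard := by
  rw [orbitCount, ← Set.InjOn.encard_image (f := fun x : X =>
    (Quotient.mk'' x : MulAction.orbitRel.Quotient A X))]
  · congr 1
    ext q
    constructor
    · rintro ⟨x, hx, rfl⟩
      obtain ⟨a, ha⟩ := exists_smul_mem_orbitReps (A := A) (π x)
      exact ⟨a • x, ⟨hU a x hx, by rwa [hπ a x hx]⟩, mk_eq_mk_iff.mpr ⟨a, rfl⟩⟩
    · rintro ⟨x, ⟨hx, -⟩, rfl⟩
      exact ⟨x, hx, rfl⟩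
  · rintro x ⟨hx, hx'⟩ y ⟨hy, hy'⟩ h
    obtain ⟨a, rfl⟩ := mk_eq_mk_iff.mp h
    rw [hπ a y hy] at hx'
    rw [hfree a _ (smul_eq_self_of_mem_orbitReps hy' hx'), one_smul]

/-- Two `A`-sets over a free `A`-set with fibres of the same size have the same number of
orbits. -/
theorem orbitCount_eq_of_fibers {Y P : Type*} [Nonempty Y] [MulAction A Y] [MulAction A P]
    (hfree : ∀ (a : A) (p : P), a • p = p → a = 1)
    {U : Set X} (hU : ∀ (a : A), ∀ x ∈ U, a • x ∈ U) (π : X → P)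
    (hπ : ∀ (a : A), ∀ x ∈ U, π (a • x) = a • π x)
    {W : Set Y} (hW : ∀ (a : A), ∀ x ∈ W, a • x ∈ W) (ρ : Y → P)
    (hρ : ∀ (a : A), ∀ x ∈ W, ρ (a • x) = a • ρ x)
    (hfin : ∀ p, {x ∈ U | π x = p}.Finite)
    (hcard : ∀ p, {x ∈ U | π x = p}.encard = {y ∈ W | ρ y = p}.encard) :
    orbitCount A U = orbitCount A W := by
  rw [orbitCount_eq_encard hfree hU π hπ, orbitCount_eq_encard hfree hW ρ hρ]
  choose F hF using fun p => (hfin p).exists_bijOn_of_encard_eq (hcard p)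
  suffices hb : Set.BijOn (fun x => F (π x) x) {x ∈ U | π x ∈ orbitReps A P}
      {y ∈ W | ρ y ∈ orbitReps A P} by rw [← hb.image_eq, hb.injOn.encard_image]
  refine ⟨?_, ?_, ?_⟩
  · rintro x ⟨hx, hx'⟩
    obtain ⟨h1, h2⟩ := (hF (π x)).mapsTo ⟨hx, rfl⟩
    exact ⟨h1, by simpa only [h2] using hx'⟩
  · rintro x ⟨hx, -⟩ y ⟨hy, -⟩ h
    have h1 := ((hF (π x)).mapsTo ⟨hx, rfl⟩).2
    have h2 := ((hF (π y)).mapsTo ⟨hy, rfl⟩).2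
    have h3 : π x = π y := by rw [← h1, ← h2]; exact congrArg ρ h
    refine (hF (π x)).injOn ⟨hx, rfl⟩ ⟨hy, h3.symm⟩ ?_
    simpa only [← h3] using h
  · rintro y ⟨hy, hy'⟩
    obtain ⟨x, ⟨hx, hx'⟩, hxy⟩ := (hF (ρ y)).surjOn ⟨hy, rfl⟩
    exact ⟨x, ⟨hx, by rwa [hx']⟩, by simpa only [hx'] using hxy⟩

theorem orbitCount_univ : orbitCount A (Set.univ : Set X) =
    ENat.card (MulAction.orbitRel.Quotient A X) := by
  rw [orbitCount, Set.image_univ, Set.range_eq_univ.mpr Quotient.mk''_surjective, Set.encard_univ]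

theorem orbitCount_add_orbitCount_compl {U : Set X} (hU : ∀ (a : A), ∀ x ∈ U, a • x ∈ U) :
    orbitCount A U + orbitCount A Uᶜ = orbitCount A (Set.univ : Set X) := by
  rw [orbitCount, orbitCount, orbitCount, ← Set.encard_union_eq, ← Set.image_union,
    Set.union_compl_self]
  rw [Set.disjoint_left]
  rintro _ ⟨x, hx, rfl⟩ ⟨y, hy, h⟩
  obtain ⟨a, rfl⟩ := mk_eq_mk_iff.mp h
  exact hy (hU a x hx)

theorem eq_of_orbitCount_le {U W : Set X} (hU : ∀ (a : A), ∀ x ∈ U, a • x ∈ U) (h : U ⊆ W)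
    (hle : orbitCount A W ≤ orbitCount A U) (hfin : orbitCount A U ≠ ⊤) : U = W := by
  have := Set.Finite.eq_of_subset_of_encard_le (Set.encard_ne_top_iff.mp hfin)
    (Set.image_mono h) hle
  refine h.antisymm fun x hx => ?_
  obtain ⟨y, hy, hyx⟩ := this.ge (Set.mem_image_of_mem _ hx)
  obtain ⟨a, rfl⟩ := mk_eq_mk_iff.mp hyx.symm
  exact hU a y hy

theorem orbitCount_subgroup {G : Type*} [Group G] [MulAction G X] {N A : Subgroup G} (hNA : N ≤ A)
    (hfin : N.relIndex A ≠ 0)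
    (hfree : ∀ (a : G) (p : X), a • p = p → a = 1) {U : Set X}
    (hU : ∀ a ∈ A, ∀ x ∈ U, a • x ∈ U) :
    orbitCount N U = N.relIndex A * orbitCount A U := by
  have hfree' : ∀ (a : A) (p : X), a • p = p → a = 1 := fun a p h => Subtype.ext (hfree a p h)
  rw [orbitCount_eq_encard hfree' (fun a => hU a a.2) id (fun _ _ _ => rfl)]
  have : Finite (A ⧸ N.subgroupOf A) := by
    have : (N.subgroupOf A).FiniteIndex := ⟨hfin⟩
    infer_instance
  have hidx : (N.relIndex A : ℕ∞) = ENat.card (A ⧸ N.subgroupOf A) := by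
    rw [ENat.card_eq_coe_natCard]; rfl
  rw [hidx, orbitCount, ← ENat.card_coe_set_eq, ← ENat.card_coe_set_eq, ← ENat.card_prod]
  symm
  let F : (A ⧸ N.subgroupOf A) × {x ∈ U | id x ∈ orbitReps A X} →
      (fun x : X => (Quotient.mk'' x : MulAction.orbitRel.Quotient N X)) '' U := fun p =>
    ⟨Quotient.mk'' (((p.1.out)⁻¹ : A) • (p.2 : X)), _, hU _ (SetLike.coe_mem _) _ p.2.2.1, rfl⟩
  refine ENat.card_congr (Equiv.ofBijective F ⟨?_, ?_⟩)
  · rintro ⟨q, x, hxU, hx⟩ ⟨q', y, hyU, hy⟩ h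
    obtain ⟨n, hn⟩ := mk_eq_mk_iff.mp (congrArg Subtype.val h)
    simp only [id] at hx hy
    let m : A := ⟨n, hNA n.2⟩
    have h1 : (q.out * m * q'.out⁻¹) • y = x := by
      rw [mul_smul, mul_smul]
      exact (congrArg (q.out • ·) hn).trans (smul_inv_smul _ _)
    have h2 := smul_eq_self_of_mem_orbitReps hy (h1 ▸ hx)
    have h3 := hfree' _ _ h2
    obtain rfl : y = x := h2.symm.trans h1
    congr 1
    rw [← q.out_eq', ← q'.out_eq', QuotientGroup.eq]
    have : q.out⁻¹ * q'.out = m := by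
      rw [mul_inv_eq_one] at h3
      rw [← h3]; group
    change q.out⁻¹ * q'.out ∈ N.subgroupOf A
    rw [this]
    exact n.2
  · rintro ⟨_, u, hu, rfl⟩
    obtain ⟨a, ha⟩ := exists_smul_mem_orbitReps (A := A) u
    refine ⟨⟨(a : A), ⟨a • u, hU a a.2 u hu, ha⟩⟩, Subtype.ext (mk_eq_mk_iff.mpr ?_)⟩
    obtain ⟨n, hn⟩ := QuotientGroup.mk_out_eq_mul (N.subgroupOf A) a
    refine ⟨⟨((n : A) : G)⁻¹, N.inv_mem n.2⟩, ?_⟩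
    rw [hn]
    change _ = (((a * n)⁻¹ : A) : G) • (a : G) • u
    rw [smul_smul]
    simp [Subgroup.smul_def]

end OrbitCount

section Euler

variable {A V E : Type*} [Group A] [MulAction A V] [MulAction A E] {s t : E → V}

theorem exists_cocycle (hfree : ∀ (a : A) (v : V), a • v = v → a = 1) :
    ∃ γ : V → A, ∀ (a : A) (v : V), γ (a • v) = a * γ v := by
  choose γ hγ using fun v : V => mk_eq_mk_iff.mp
    (Quotient.out_eq' (Quotient.mk'' v : MulAction.orbitRel.Quotient A V))
  refine ⟨fun v => (γ v)⁻¹, fun a v => ?_⟩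
  have h : (Quotient.mk'' (a • v) : MulAction.orbitRel.Quotient A V) = Quotient.mk'' v :=
    mk_eq_mk_iff.mpr ⟨a, rfl⟩
  have h1 := hγ (a • v)
  rw [h, ← hγ v, ← inv_smul_eq_iff, smul_smul, smul_smul] at h1
  have h2 := hfree _ _ h1
  rw [mul_assoc, inv_mul_eq_one] at h2
  change (γ (a • v))⁻¹ = a * (γ v)⁻¹
  rw [h2]
  group

/-- The Euler characteristic of the quotient of a tree by a free action of `A`. -/
theorem card_quotient_edges_add_one
    (hs : ∀ (a : A) e, s (a • e) = a • s e) (ht : ∀ (a : A) e, t (a • e) = a • t e)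
    (hfree : ∀ (a : A) (v : V), a • v = v → a = 1)
    (hconn : ∀ u v, Conn s t Set.univ u v) (hacyc : Acyclic s t)
    [Finite (MulAction.orbitRel.Quotient A E)] [Finite (MulAction.orbitRel.Quotient A V)]
    [Nonempty V] [FiniteDimensional ℚ (Additive A →+ ℚ)] :
    Nat.card (MulAction.orbitRel.Quotient A E) + 1 =
      Nat.card (MulAction.orbitRel.Quotient A V) + Module.finrank ℚ (Additive A →+ ℚ) := by
  obtain ⟨γ, hγ⟩ := exists_cocycle hfree
  have v₀ : V := Classical.arbitrary V
  have := Fintype.ofFinite (MulAction.orbitRel.Quotient A E)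
  have := Fintype.ofFinite (MulAction.orbitRel.Quotient A V)
  let mkV : V → MulAction.orbitRel.Quotient A V := Quotient.mk''
  let mkE : E → MulAction.orbitRel.Quotient A E := Quotient.mk''
  have hmkV : ∀ (a : A) v, mkV (a • v) = mkV v := fun a v => mk_eq_mk_iff.mpr ⟨a, rfl⟩
  have hmkE : ∀ (a : A) v, mkE (a • v) = mkE v := fun a v => mk_eq_mk_iff.mpr ⟨a, rfl⟩
  let pot : (MulAction.orbitRel.Quotient A V → ℚ) × (Additive A →+ ℚ) → V → ℚ :=
    fun p v => p.1 (mkV v) + p.2 (Additive.ofMul (γ v))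
  have hpot : ∀ p (a : A) v, pot p (a • v) = pot p v + p.2 (Additive.ofMul a) := fun p a v => by
    simp only [pot, hmkV, hγ, ofMul_mul, map_add]
    ring
  let L : (MulAction.orbitRel.Quotient A V → ℚ) × (Additive A →+ ℚ) →ₗ[ℚ]
      (MulAction.orbitRel.Quotient A E → ℚ) × ℚ :=
    { toFun := fun p => (fun q => pot p (t q.out) - pot p (s q.out), pot p v₀)
      map_add' := fun p q => by
        ext <;> simp [pot] <;> ring
      map_smul' := fun c p => by
        ext <;> simp [pot] <;> ring }
  have hinj : Function.Injective L := by
    rw [injective_iff_map_eq_zero]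
    intro p hp
    have h1 : ∀ e ∈ Set.univ, pot p (s e) = pot p (t e) := fun e _ => by
      obtain ⟨a, ha⟩ := mk_eq_mk_iff.mp (Quotient.out_eq' (mkE e))
      have h2 := congrFun (congrArg Prod.fst hp) (mkE e)
      simp only [L, LinearMap.coe_mk, AddHom.coe_mk, Prod.fst_zero, Pi.zero_apply] at h2
      rw [← ha, hs, ht, hpot, hpot] at h2
      linarith
    have h0 : ∀ v, pot p v = 0 := fun v => ((hconn v v₀).apply_eq h1).trans (congrArg Prod.snd hp)
    have h2 : p.2 = 0 := by
      ext a
      have := hpot p a v₀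
      rw [h0, h0] at this
      simpa using this.symm
    refine Prod.ext (funext fun q => ?_) h2
    obtain ⟨v, rfl⟩ := Quotient.mk''_surjective q
    simpa [pot, h2] using h0 v
  have hsurj : Function.Surjective L := by
    rintro ⟨c, x⟩
    obtain ⟨f, hf⟩ := hacyc (c ∘ mkE)
    have hdiff : ∀ (a : A) u v, f (a • u) - f u = f (a • v) - f v := fun a u v =>
      (hconn u v).apply_eq (g := fun u => f (a • u) - f u) fun e _ => by
        have h1 := hf e
        have h2 := hf (a • e)
        rw [hs, ht, Function.comp_apply, hmkE] at h2
        rw [Function.comp_apply] at h1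
        linarith
    let φ : Additive A →+ ℚ := AddMonoidHom.mk' (fun a => f (a.toMul • v₀) - f v₀) fun a b => by
      have := hdiff a.toMul (b.toMul • v₀) v₀
      rw [smul_smul] at this
      rw [toMul_add]
      linarith
    have hφ : ∀ (a : A) v, f (a • v) = f v + φ (Additive.ofMul a) := fun a v => by
      have := hdiff a v v₀
      simp only [φ, AddMonoidHom.mk'_apply, toMul_ofMul]
      linarith
    let h : V → ℚ := fun v => f v - φ (Additive.ofMul (γ v)) - f v₀ + x
    have hh : ∀ (a : A) v, h (a • v) = h v := fun a v => by
      simp only [h, hφ, hγ, ofMul_mul, map_add]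
      ring
    have hout : ∀ v, h (mkV v).out = h v := fun v => by
      obtain ⟨a, ha⟩ := mk_eq_mk_iff.mp (Quotient.out_eq' (mkV v))
      rw [← ha, hh]
    have hp : ∀ v, pot (fun q => h q.out, φ) v = f v - f v₀ + x := fun v => by
      simp only [pot, hout]
      ring
    refine ⟨(fun q => h q.out, φ), ?_⟩
    ext q
    · have := hf q.out
      have hq : mkE q.out = q := Quotient.out_eq' q
      simp only [L, LinearMap.coe_mk, AddHom.coe_mk, hp]
      rw [this, Function.comp_apply, hq]
      ring
    · simp [L, hp]
  have := (LinearEquiv.ofBijective L ⟨hinj, hsurj⟩).finrank_eq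
  simp only [Module.finrank_prod, Module.finrank_fintype_fun_eq_card, Module.finrank_self] at this
  rw [Nat.card_eq_fintype_card, Nat.card_eq_fintype_card, this]

end Euler

section Essential

variable {V E : Type*} [LinearOrder E] {s t : E → V}

/-- An edge is essential if both of its endpoints are joined to infinitely many vertices by
paths through smaller edges. -/
def IsEssential (s t : E → V) (e : E) : Prop :=
  (component s t (Set.Iio e) (s e)).Infinite ∧ (component s t (Set.Iio e) (t e)).Infinite

/-- The component of `v` becomes infinite exactly when the edge `e` is added. -/
def IsCritical (s t : E → V) (v : V) (e : E) : Prop :=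
  (component s t (Set.Iio e) v).Finite ∧ (component s t (Set.Iic e) v).Infinite

theorem IsCritical.lt {v : V} {e f : E} (h : IsCritical s t v e)
    (hf : (component s t (Set.Iic f) v).Finite) : f < e := by
  by_contra! hle
  exact h.2 (hf.subset (component_mono (Set.Iic_subset_Iic.mpr hle)))

theorem IsCritical.unique {v : V} {e f : E} (h : IsCritical s t v e) (h' : IsCritical s t v f) :
    e = f := by
  rcases lt_trichotomy e f with hlt | heq | hlt
  · exact (h.2 (h'.1.subset (component_mono fun x hx => lt_of_le_of_lt hx hlt))).elim
  · exact heq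
  · exact (h'.2 (h.1.subset (component_mono fun x hx => lt_of_le_of_lt hx hlt))).elim

theorem component_Iic_subset {v : V} {e : E} {W : Set V}
    (hW : component s t (Set.Iio e) v ⊆ W) (hcl : ∀ f < e, s f ∈ W ↔ t f ∈ W)
    (he : s e ∈ W ↔ t e ∈ W) : component s t (Set.Iic e) v ⊆ W :=
  component_subset (hW (self_mem_component v)) fun f hf =>
    (lt_or_eq_of_le hf).elim (hcl f) fun h => h ▸ he

theorem IsCritical.side {v : V} {e : E} (h : IsCritical s t v e) :
    (s e ∈ component s t (Set.Iio e) v ∧ (component s t (Set.Iio e) (t e)).Infinite) ∨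
      (t e ∈ component s t (Set.Iio e) v ∧ (component s t (Set.Iio e) (s e)).Infinite) := by
  by_cases h1 : s e ∈ component s t (Set.Iio e) v
  · refine Or.inl ⟨h1, fun h3 => h.2 ((h.1.union h3).subset (component_Iic_subset
      Set.subset_union_left (fun f hf => ?_) (iff_of_true (Or.inl h1)
        (Or.inr (self_mem_component _)))))⟩
    exact or_congr (mem_component_iff hf) (mem_component_iff hf)
  · by_cases h2 : t e ∈ component s t (Set.Iio e) v
    · refine Or.inr ⟨h2, fun h3 => h.2 ((h.1.union h3).subset (component_Iic_subset
        Set.subset_union_left (fun f hf => ?_) (iff_of_true (Or.inr (self_mem_component _))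
          (Or.inl h2))))⟩
      exact or_congr (mem_component_iff hf) (mem_component_iff hf)
    · exact (h.2 (h.1.subset (component_Iic_subset subset_rfl
        (fun f hf => mem_component_iff hf) (iff_of_false h1 h2)))).elim

theorem IsCritical.of_conn {v w : V} {e : E} (h : IsCritical s t v e)
    (hw : Conn s t (Set.Iio e) v w) : IsCritical s t w e := by
  have := hw.mono Set.Iio_subset_Iic_self
  exact ⟨hw.component_eq ▸ h.1, this.component_eq ▸ h.2⟩

theorem IsCritical.conn {v w : V} {e : E} (h : IsCritical s t v e) (h' : IsCritical s t w e) :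
    Conn s t (Set.Iio e) v w := by
  rcases h.side with ⟨h1, h2⟩ | ⟨h1, h2⟩ <;> rcases h'.side with ⟨h3, h4⟩ | ⟨h3, h4⟩
  · exact h1.trans h3.symm
  · exact (h4 (h1.component_eq ▸ h.1)).elim
  · exact (h4 (h1.component_eq ▸ h.1)).elim
  · exact h1.trans h3.symm

theorem isCritical_left {e : E} (h1 : (component s t (Set.Iio e) (s e)).Finite)
    (h2 : (component s t (Set.Iio e) (t e)).Infinite) : IsCritical s t (s e) e := by
  refine ⟨h1, fun h => h2 (h.subset ?_)⟩
  rw [(Conn.edge (s := s) (t := t) (D := Set.Iic e) (Set.mem_Iic.mpr le_rfl)).component_eq]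
  exact component_mono Set.Iio_subset_Iic_self

theorem isCritical_right {e : E} (h1 : (component s t (Set.Iio e) (t e)).Finite)
    (h2 : (component s t (Set.Iio e) (s e)).Infinite) : IsCritical s t (t e) e := by
  refine ⟨h1, fun h => h2 (h.subset ?_)⟩
  rw [← (Conn.edge (s := s) (t := t) (D := Set.Iic e) (Set.mem_Iic.mpr le_rfl)).component_eq]
  exact component_mono Set.Iio_subset_Iic_self

section Existence

variable [Infinite V] (hconn : ∀ u v, Conn s t Set.univ u v)
  (hloc : ∀ W : Set V, W.Finite → {e | s e ∈ W ∨ t e ∈ W}.Finite)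
include hconn hloc

theorem exists_min_boundary {W : Set V} (hW : W.Finite) (hne : W.Nonempty) :
    ∃ e, ¬ (s e ∈ W ↔ t e ∈ W) ∧ ∀ f < e, (s f ∈ W ↔ t f ∈ W) := by
  have hfin : {e | ¬ (s e ∈ W ↔ t e ∈ W)}.Finite :=
    (hloc W hW).subset fun e (he : ¬ _) => by
      by_contra hcon
      exact he (iff_of_false (fun h => hcon (Or.inl h)) fun h => hcon (Or.inr h))
  have hne' : {e | ¬ (s e ∈ W ↔ t e ∈ W)}.Nonempty := by
    by_contra hcon
    obtain ⟨v, hv⟩ := hne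
    refine Set.infinite_univ (hW.subset fun u _ => component_subset (D := Set.univ) hv
      (fun e _ => ?_) (hconn v u))
    by_contra he
    exact hcon ⟨e, he⟩
  obtain ⟨e, he, hmin⟩ := Set.exists_min_image _ id hfin hne'
  refine ⟨e, he, fun f hf => ?_⟩
  by_contra hcon
  exact (hmin f hcon).not_gt hf

theorem exists_isCritical {M : ℕ}
    (hM : ∀ e, (component s t (Set.Iio e) (s e)).ncard ≤ M ∧
      (component s t (Set.Iio e) (t e)).ncard ≤ M) (v : V) : ∃ e, IsCritical s t v e := by
  by_contra hno
  have grow : ∀ n : ℕ, ∃ e, (component s t (Set.Iio e) v).Finite ∧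
      n ≤ (component s t (Set.Iio e) v).ncard ∧
      ¬ (s e ∈ component s t (Set.Iio e) v ↔ t e ∈ component s t (Set.Iio e) v) := by
    intro n
    induction n with
    | zero =>
      obtain ⟨e, he, hmin⟩ := exists_min_boundary hconn hloc (Set.finite_singleton v) ⟨v, rfl⟩
      have : component s t (Set.Iio e) v = {v} :=
        (component_subset (W := {v}) (Set.mem_singleton v) hmin).antisymm
          (Set.singleton_subset_iff.mpr (self_mem_component v))
      exact ⟨e, by simp [this], Nat.zero_le _, by rwa [this]⟩
    | succ n ih =>
      obtain ⟨e, hfin, hn, hb⟩ := ih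
      have hfin' : (component s t (Set.Iic e) v).Finite := by
        by_contra hinf
        exact hno ⟨e, hfin, hinf⟩
      obtain ⟨e', he', hmin⟩ := exists_min_boundary hconn hloc hfin' ⟨v, self_mem_component v⟩
      have hlt : e < e' := by
        by_contra! hle
        exact he' (mem_component_iff hle)
      have heq : component s t (Set.Iio e') v = component s t (Set.Iic e) v :=
        (component_subset (self_mem_component v) hmin).antisymm
          (component_mono fun x hx => lt_of_le_of_lt hx hlt)
      refine ⟨e', by rwa [heq], ?_, by rwa [heq]⟩
      rw [heq]
      refine lt_of_le_of_lt hn (Set.ncard_lt_ncard (LE.le.ssubset_of_ne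
        (component_mono Set.Iio_subset_Iic_self) fun h => hb ?_) hfin')
      rw [h]
      exact mem_component_iff (Set.mem_Iic.mpr le_rfl)
  obtain ⟨e, -, hn, hb⟩ := grow (M + 1)
  by_cases h1 : s e ∈ component s t (Set.Iio e) v
  · have := (hM e).1
    rw [← Conn.component_eq h1] at this
    omega
  · have h2 : t e ∈ component s t (Set.Iio e) v := by tauto
    have := (hM e).2
    rw [← Conn.component_eq h2] at this
    omega

end Existence

section Action

variable {A : Type*} [Group A] [MulAction A V] [MulAction A E]
  (hs : ∀ (a : A) e, s (a • e) = a • s e) (ht : ∀ (a : A) e, t (a • e) = a • t e)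
  (hlt : ∀ (a : A) (e f : E), e < f → a • e < a • f)
include hs ht

omit [LinearOrder E] in
theorem Conn.smul {D D' : Set E} {u v : V} (a : A) (hD : ∀ e ∈ D, a • e ∈ D')
    (h : Conn s t D u v) : Conn s t D' (a • u) (a • v) :=
  Conn.map (φ := (a • ·)) (ψ := (a • ·)) (fun e _ => hs a e) (fun e _ => ht a e) hD h

omit [LinearOrder E] in
theorem component_smul {D D' : Set E} (a : A) (hD : ∀ e, a • e ∈ D' ↔ e ∈ D) (v : V) :
    component s t D' (a • v) = (a • ·) '' component s t D v := by
  ext w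
  constructor
  · intro h
    refine ⟨a⁻¹ • w, ?_, smul_inv_smul _ _⟩
    have := Conn.smul hs ht (D' := D) a⁻¹ (fun e he => (hD _).mp (by rwa [smul_inv_smul])) h
    rwa [inv_smul_smul] at this
  · rintro ⟨w, hw, rfl⟩
    exact Conn.smul hs ht a (fun e he => (hD e).mpr he) hw

include hlt

omit hs ht in
theorem smul_lt_smul_iff_of_strictMono (a : A) (e f : E) : a • e < a • f ↔ e < f :=
  ⟨fun h => by simpa using hlt a⁻¹ _ _ h, hlt a e f⟩

omit hs ht in
theorem smul_le_smul_iff_of_strictMono (a : A) (e f : E) : a • e ≤ a • f ↔ e ≤ f := by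
  rw [← not_lt, ← not_lt]
  exact not_congr ⟨fun h => by simpa using hlt a⁻¹ _ _ h, hlt a f e⟩

theorem component_Iio_smul (a : A) (e : E) (v : V) :
    component s t (Set.Iio (a • e)) (a • v) = (a • ·) '' component s t (Set.Iio e) v :=
  component_smul hs ht a (fun f => smul_lt_smul_iff_of_strictMono hlt a f e) v

theorem component_Iic_smul (a : A) (e : E) (v : V) :
    component s t (Set.Iic (a • e)) (a • v) = (a • ·) '' component s t (Set.Iic e) v :=
  component_smul hs ht a (fun f => smul_le_smul_iff_of_strictMono hlt a f e) v

theorem IsCritical.smul (a : A) {v : V} {e : E} (h : IsCritical s t v e) :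
    IsCritical s t (a • v) (a • e) := by
  rw [IsCritical, component_Iio_smul hs ht hlt, component_Iic_smul hs ht hlt]
  exact ⟨h.1.image _, h.2.image (MulAction.injective a).injOn⟩

theorem IsEssential.smul (a : A) {e : E} (h : IsEssential s t e) : IsEssential s t (a • e) := by
  rw [IsEssential, hs, ht, component_Iio_smul hs ht hlt, component_Iio_smul hs ht hlt]
  exact ⟨h.1.image (MulAction.injective a).injOn, h.2.image (MulAction.injective a).injOn⟩

theorem exists_ncard_component_le [Finite (MulAction.orbitRel.Quotient A E)] :
    ∃ M, ∀ e, (component s t (Set.Iio e) (s e)).ncard ≤ M ∧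
      (component s t (Set.Iio e) (t e)).ncard ≤ M := by
  obtain ⟨M, hM⟩ := (Set.finite_range fun q : MulAction.orbitRel.Quotient A E =>
    (component s t (Set.Iio q.out) (s q.out)).ncard +
      (component s t (Set.Iio q.out) (t q.out)).ncard).bddAbove
  refine ⟨M, fun e => ?_⟩
  obtain ⟨a, ha⟩ := mk_eq_mk_iff.mp
    (Quotient.out_eq' (Quotient.mk'' e : MulAction.orbitRel.Quotient A E))
  have := hM ⟨Quotient.mk'' e, rfl⟩
  simp only [← ha, hs, ht, component_Iio_smul hs ht hlt,
    Set.ncard_image_of_injective _ (MulAction.injective a)] at this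
  omega

variable (hfree : ∀ (a : A) (v : V), a • v = v → a = 1)
include hfree

omit [LinearOrder E] ht hlt in
theorem finite_fiber [Finite (MulAction.orbitRel.Quotient A E)] (v : V) : {e | s e = v}.Finite := by
  refine Set.Finite.of_finite_image (f := fun e => (Quotient.mk'' e :
    MulAction.orbitRel.Quotient A E)) (Set.toFinite _) ?_
  rintro e rfl f hf h
  obtain ⟨a, rfl⟩ := mk_eq_mk_iff.mp h
  rw [Set.mem_ofPred_eq, hs] at hf
  rw [hfree a (s f) hf.symm, one_smul]

theorem orbitCount_not_isEssential [Infinite V] [Finite (MulAction.orbitRel.Quotient A E)]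
    (hconn : ∀ u v, Conn s t Set.univ u v) (hacyc : Acyclic s t) :
    orbitCount A {e | ¬ IsEssential s t e} = orbitCount A (Set.univ : Set V) := by
  classical
  have hloc : ∀ W : Set V, W.Finite → {e | s e ∈ W ∨ t e ∈ W}.Finite := fun W hW =>
    (hW.preimage' fun v _ => finite_fiber hs hfree v).union
      (hW.preimage' fun v _ => finite_fiber ht hfree v)
  obtain ⟨M, hM⟩ := exists_ncard_component_le hs ht hlt
  choose crit hcrit using exists_isCritical hconn hloc hM
  have hcrit_eq : ∀ {v e}, IsCritical s t v e → crit v = e := fun h => (hcrit _).unique h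
  let ρ : E → E := fun e =>
    if (component s t (Set.Iio e) (s e)).Finite then crit (s e) else crit (t e)
  have hcs : ∀ (a : A) v, crit (a • v) = a • crit v := fun a v =>
    hcrit_eq ((hcrit v).smul hs ht hlt a)
  have hess : ∀ (a : A) e, IsEssential s t (a • e) ↔ IsEssential s t e := fun a e =>
    ⟨fun h => by simpa using h.smul hs ht hlt a⁻¹, fun h => h.smul hs ht hlt a⟩
  have hfib : ∀ v, {w | crit w = crit v} = component s t (Set.Iio (crit v)) v := fun v =>
    Set.ext fun w => ⟨fun h => (hcrit v).conn (h ▸ hcrit w),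
      fun h => hcrit_eq ((hcrit v).of_conn h)⟩
  have hfibρ : ∀ v, {e | ¬ IsEssential s t e ∧ ρ e = crit v} =
      insert (crit v) {f | f < crit v ∧ s f ∈ component s t (Set.Iio (crit v)) v} := by
    intro v
    ext f
    constructor
    · rintro ⟨hf, hρ⟩
      by_cases h1 : (component s t (Set.Iio f) (s f)).Finite
      · simp only [ρ, h1, if_true] at hρ
        by_cases h2 : (component s t (Set.Iio f) (t f)).Finite
        · refine Or.inr ⟨?_, ?_⟩
          · rw [← hρ]
            refine (hcrit (s f)).lt ((h1.union h2).subset (component_Iic_subset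
              Set.subset_union_left (fun g hg => ?_) (iff_of_true
              (Or.inl (self_mem_component _)) (Or.inr (self_mem_component _)))))
            exact or_congr (mem_component_iff hg) (mem_component_iff hg)
          · rw [← hfib v]
            exact hρ
        · exact Or.inl ((hcrit_eq (isCritical_left h1 h2)).symm.trans hρ)
      · simp only [ρ, h1, if_false] at hρ
        have h2 : (component s t (Set.Iio f) (t f)).Finite := by
          by_contra h2
          exact hf ⟨h1, h2⟩
        exact Or.inl ((hcrit_eq (isCritical_right h2 h1)).symm.trans hρ)
    · rintro (rfl | ⟨hlt', hmem⟩)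
      · rcases (hcrit v).side with ⟨h1, h2⟩ | ⟨h1, h2⟩
        · have h3 : (component s t (Set.Iio (crit v)) (s (crit v))).Finite :=
            h1.component_eq ▸ (hcrit v).1
          refine ⟨fun h => h.1 h3, ?_⟩
          simp only [ρ, h3, if_true]
          exact hcrit_eq ((hcrit v).of_conn h1)
        · have h3 : (component s t (Set.Iio (crit v)) (t (crit v))).Finite :=
            h1.component_eq ▸ (hcrit v).1
          refine ⟨fun h => h.2 h3, ?_⟩
          simp only [ρ, Set.not_finite.mpr h2, if_false]
          exact hcrit_eq ((hcrit v).of_conn h1)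
      · have h3 : (component s t (Set.Iio f) (s f)).Finite := by
          refine Set.Finite.subset ?_ (component_mono (Set.Iio_subset_Iio hlt'.le))
          rw [← Conn.component_eq hmem]
          exact (hcrit v).1
        refine ⟨fun h => h.1 h3, ?_⟩
        simp only [ρ, h3, if_true]
        rw [← hfib v] at hmem
        exact hmem
  have hfinρ : ∀ v, {f | f < crit v ∧ s f ∈ component s t (Set.Iio (crit v)) v}.Finite := fun v =>
    (hloc _ (hcrit v).1).subset fun f hf => Or.inl hf.2
  have hrange : ∀ e, ∃ v, ρ e = crit v := fun e => by
    by_cases h : (component s t (Set.Iio e) (s e)).Finite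
    · exact ⟨s e, by simp only [ρ, h, if_true]⟩
    · exact ⟨t e, by simp only [ρ, h, if_false]⟩
  refine orbitCount_eq_of_fibers (P := E) (U := {e | ¬ IsEssential s t e})
    (W := (Set.univ : Set V)) ?_
    (fun a e he => ?_) ρ (fun a e _ => ?_) (fun _ _ _ => trivial) crit (fun a v _ => hcs a v) ?_ ?_
  · intro a e hae
    refine hfree a (s e) ?_
    rw [← hs, hae]
  · exact fun h => he ((hess a e).mp h)
  · have : (component s t (Set.Iio (a • e)) (s (a • e))).Finite ↔
        (component s t (Set.Iio e) (s e)).Finite := by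
      rw [hs, component_Iio_smul hs ht hlt,
        Set.finite_image_iff (MulAction.injective a).injOn]
    simp only [ρ]
    by_cases h : (component s t (Set.Iio e) (s e)).Finite
    · rw [if_pos h, if_pos (this.mpr h), hs, hcs]
    · rw [if_neg h, if_neg (mt this.mp h), ht, hcs]
  · intro p
    by_cases hp : ∃ v, crit v = p
    · obtain ⟨v, rfl⟩ := hp
      exact (hfibρ v).symm ▸ (hfinρ v).insert _
    · refine Set.finite_empty.subset ?_
      rintro e ⟨-, rfl⟩
      exact hp ((hrange e).imp fun _ h => h.symm)
  · intro p
    by_cases hp : ∃ v, crit v = p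
    · obtain ⟨v, rfl⟩ := hp
      simp only [Set.mem_univ, true_and]
      rw [hfib v]
      refine (congrArg Set.encard (hfibρ v)).trans ?_
      rw [Set.encard_insert_of_notMem (fun h => lt_irrefl _ h.1), ← (hfinρ v).cast_ncard_eq,
        ← (hcrit v).1.cast_ncard_eq, ← hacyc.ncard_add_one (hcrit v).1 (hfinρ v) (fun e he => he.2)
        (fun e he => (mem_component_iff (D := Set.Iio (crit v)) (Set.mem_Iio.mpr he.1)).mp he.2)
        (self_mem_component v) ?_]
      · norm_cast
      · refine fun w hw => component_subset (self_mem_component v)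
          (fun f hf => ⟨fun h => ?_, fun h => ?_⟩) hw
        · exact Conn.trans h (Conn.edge ⟨hf, h.mono fun _ h => h.1⟩)
        · exact Conn.trans h (Conn.symm (Conn.edge
            ⟨hf, (mem_component_iff hf).mpr (Conn.mono (fun _ h => h.1) h)⟩))
    · have h1 : {e | e ∈ {e | ¬ IsEssential s t e} ∧ ρ e = p} = ∅ := by
        rw [Set.eq_empty_iff_forall_notMem]
        rintro e ⟨-, rfl⟩
        exact hp ((hrange e).imp fun _ h => h.symm)
      have h2 : {v | v ∈ (Set.univ : Set V) ∧ crit v = p} = ∅ := by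
        rw [Set.eq_empty_iff_forall_notMem]
        rintro v ⟨-, rfl⟩
        exact hp ⟨v, rfl⟩
      rw [h1, h2, Set.encard_empty, Set.encard_empty]

end Action

end Essential

section LeftOrder

variable {G : Type*} [Group G] [IsFreeGroup G]

/-- Free groups are locally indicable. -/
theorem exists_hom_int {S : Set G} (hS : ∃ g ∈ S, g ≠ 1) :
    ∃ φ : Subgroup.closure S →* Multiplicative ℤ,
      ∃ (g : G) (hg : g ∈ S), φ ⟨g, Subgroup.subset_closure hg⟩ ≠ 1 := by
  obtain ⟨g, hg, hg1⟩ := hS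
  let φ : Subgroup.closure S →* Multiplicative ℤ :=
    IsFreeGroup.lift fun _ => Multiplicative.ofAdd (1 : ℤ)
  refine ⟨φ, ?_⟩
  by_contra! hcon
  have hall : ∀ x (hx : x ∈ Subgroup.closure S), φ ⟨x, hx⟩ = 1 := by
    intro x hx
    induction hx using Subgroup.closure_induction with
    | mem x hx => exact hcon x hx
    | one => exact map_one φ
    | mul x y hx hy ihx ihy => exact (map_mul φ ⟨x, hx⟩ ⟨y, hy⟩).trans (by rw [ihx, ihy, one_mul])
    | inv x hx ih => exact (map_inv φ ⟨x, hx⟩).trans (by rw [ih, inv_one])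
  cases isEmpty_or_nonempty (IsFreeGroup.Generators (Subgroup.closure S)) with
  | inl h =>
    have : Subsingleton (Subgroup.closure S) :=
      (IsFreeGroup.toFreeGroup (Subgroup.closure S)).injective.subsingleton
    exact hg1 (congrArg Subtype.val
      (Subsingleton.elim (⟨g, Subgroup.subset_closure hg⟩ : Subgroup.closure S) 1))
  | inr h =>
    obtain ⟨x⟩ := h
    have h1 : φ (IsFreeGroup.of x) = Multiplicative.ofAdd (1 : ℤ) := by simp [φ]
    rw [hall _ (IsFreeGroup.of x).2] at h1
    exact absurd h1 (by decide)

theorem exists_signs (n : ℕ) (S : Finset G) (hn : S.card = n) (hS : (1 : G) ∉ S) :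
    ∃ ε : G → ℤˣ, (1 : G) ∉ Subsemigroup.closure ((fun g => g ^ (ε g : ℤ)) '' (S : Set G)) := by
  classical
  induction n using Nat.strong_induction_on generalizing S with
  | _ n ih =>
  rcases S.eq_empty_or_nonempty with rfl | ⟨g, hg⟩
  · refine ⟨1, ?_⟩
    simp only [Finset.coe_empty, Set.image_empty, Subsemigroup.closure_empty]
    exact Subsemigroup.notMem_bot
  obtain ⟨φ, k, hk, hφk⟩ := exists_hom_int (S := (S : Set G)) ⟨g, hg, fun h => hS (h ▸ hg)⟩
  let ψ : G → ℤ := fun g => if h : g ∈ Subgroup.closure (S : Set G) then (φ ⟨g, h⟩).toAdd else 0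
  have hmul : ∀ x ∈ Subgroup.closure (S : Set G), ∀ y ∈ Subgroup.closure (S : Set G),
      ψ (x * y) = ψ x + ψ y := fun x hx y hy => by
    simp only [ψ, hx, hy, mul_mem hx hy, dite_true]
    rw [← toAdd_mul, ← map_mul]
    rfl
  have hinv : ∀ x ∈ Subgroup.closure (S : Set G), ψ x⁻¹ = - ψ x := fun x hx => by
    simp only [ψ, hx, inv_mem hx, dite_true]
    rw [← toAdd_inv, ← map_inv]
    rfl
  have hψk : ψ k ≠ 0 := by
    have : ψ k = (φ ⟨k, Subgroup.subset_closure hk⟩).toAdd := dif_pos _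
    rw [this]
    exact hφk
  obtain ⟨ε, hε⟩ := ih (S.filter (ψ · = 0)).card
    (hn ▸ Finset.card_lt_card (Finset.filter_ssubset.mpr ⟨k, hk, hψk⟩)) _ rfl
    (fun h => hS (Finset.mem_filter.mp h).1)
  refine ⟨fun g => if ψ g = 0 then ε g else if 0 < ψ g then 1 else -1, fun hone => ?_⟩
  have key : ∀ x ∈ Subsemigroup.closure ((fun g => g ^ ((if ψ g = 0 then ε g else
      if 0 < ψ g then 1 else -1 : ℤˣ) : ℤ)) '' (S : Set G)),
      x ∈ Subgroup.closure (S : Set G) ∧ (0 < ψ x ∨ (ψ x = 0 ∧ x ∈ Subsemigroup.closure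
        ((fun g => g ^ (ε g : ℤ)) '' (S.filter (ψ · = 0) : Set G)))) := by
    intro x hx
    induction hx using Subsemigroup.closure_induction with
    | mem x hx =>
      obtain ⟨g, hg, rfl⟩ := hx
      have hgc : g ∈ Subgroup.closure (S : Set G) := Subgroup.subset_closure hg
      refine ⟨zpow_mem hgc _, ?_⟩
      rcases lt_trichotomy (ψ g) 0 with h | h | h
      · left
        simp only [h.ne, h.not_gt, if_false, Units.val_neg, Units.val_one, zpow_neg, zpow_one,
          hinv g hgc]
        omega
      · right
        simp only [h, if_true]
        constructor
        · rcases Int.units_eq_one_or (ε g) with h1 | h1 <;> simp [h1, h, hinv g hgc]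
        · exact Subsemigroup.subset_closure ⟨g, by simpa [h] using hg, rfl⟩
      · left
        simp [h.ne', h]
    | mul x y hx hy ihx ihy =>
      refine ⟨mul_mem ihx.1 ihy.1, ?_⟩
      rw [hmul x ihx.1 y ihy.1]
      rcases ihx.2 with h1 | ⟨h1, h1'⟩ <;> rcases ihy.2 with h2 | ⟨h2, h2'⟩
      · left; omega
      · left; omega
      · left; omega
      · exact Or.inr ⟨by omega, mul_mem h1' h2'⟩
  rcases (key 1 hone).2 with h | ⟨-, h⟩
  · have := hmul 1 (one_mem _) 1 (one_mem _)
    rw [mul_one] at this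
    omega
  · exact hε h

/-- Free groups are left orderable. -/
theorem exists_positive_cone : ∃ P : Set G, (∀ a ∈ P, ∀ b ∈ P, a * b ∈ P) ∧ (1 : G) ∉ P ∧
    ∀ g, g ≠ 1 → g ∈ P ∨ g⁻¹ ∈ P := by
  classical
  choose ε hε using fun S : Finset G => exists_signs _ (S.erase 1) rfl (Finset.notMem_erase _ _)
  let U : Ultrafilter (Finset G) := Ultrafilter.of Filter.atTop
  have hmem : ∀ g : G, ∀ᶠ S : Finset G in U, g ∈ S := fun g =>
    Filter.Eventually.filter_mono (Ultrafilter.of_le _) ((Filter.eventually_ge_atTop {g}).mono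
      fun S hS => Finset.singleton_subset_iff.mp hS)
  have hpos : ∀ {S : Finset G} {g : G}, g ≠ 1 → g ∈ S → ε S g = 1 → g ∈ Subsemigroup.closure
      ((fun g => g ^ (ε S g : ℤ)) '' (S.erase 1 : Set G)) := fun {S g} h1 h2 h3 =>
    Subsemigroup.subset_closure ⟨g, by simp [h1, h2], by simp [h3]⟩
  have hneg : ∀ {S : Finset G} {g : G}, g ≠ 1 → g ∈ S → ¬ ε S g = 1 → g⁻¹ ∈ Subsemigroup.closure
      ((fun g => g ^ (ε S g : ℤ)) '' (S.erase 1 : Set G)) := fun {S g} h1 h2 h3 =>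
    Subsemigroup.subset_closure ⟨g, by simp [h1, h2],
      by simp [(Int.units_eq_one_or (ε S g)).resolve_left h3]⟩
  refine ⟨{g | g ≠ 1 ∧ ∀ᶠ S in U, ε S g = 1}, ?_, fun h => h.1 rfl, ?_⟩
  · rintro a ⟨ha1, ha⟩ b ⟨hb1, hb⟩
    have hab : ∀ᶠ S in U, a * b ∈ Subsemigroup.closure
        ((fun g => g ^ (ε S g : ℤ)) '' (S.erase 1 : Set G)) := by
      filter_upwards [ha, hb, hmem a, hmem b] with S h1 h2 h3 h4
      exact mul_mem (hpos ha1 h3 h1) (hpos hb1 h4 h2)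
    have hne : a * b ≠ 1 := fun h => by
      obtain ⟨S, hS⟩ := hab.exists
      exact hε S (h ▸ hS)
    refine ⟨hne, ?_⟩
    filter_upwards [hab, hmem (a * b)] with S h1 h2
    by_contra h3
    have := mul_mem h1 (hneg hne h2 h3)
    rw [mul_inv_cancel] at this
    exact hε S this
  · intro g hg
    by_contra! hcon
    simp only [Set.mem_ofPred_eq, not_and] at hcon
    have h1 := Ultrafilter.eventually_not.mpr (hcon.1 hg)
    have h2 := Ultrafilter.eventually_not.mpr (hcon.2 (inv_ne_one.mpr hg))
    obtain ⟨S, h1, h2, h3, h4⟩ := (h1.and (h2.and ((hmem g).and (hmem g⁻¹)))).exists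
    have := mul_mem (hneg hg h3 h1) (hneg (inv_ne_one.mpr hg) h4 h2)
    rw [mul_inv_cancel] at this
    exact hε S this

end LeftOrder

/-- An edge of a Cayley graph of `G`, given by its starting point and its label. -/
@[ext]
structure CayleyEdge (G X : Type*) where
  /-- the starting point of the edge -/
  base : G
  /-- the generator labelling the edge -/
  label : X

namespace CayleyEdge

variable {G X : Type*}

instance [Group G] : MulAction G (CayleyEdge G X) where
  smul g e := ⟨g * e.base, e.label⟩
  one_smul _ := CayleyEdge.ext (one_mul _) rfl
  mul_smul _ _ _ := CayleyEdge.ext (mul_assoc _ _ _) rfl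

@[simp]
theorem smul_base [Group G] (g : G) (e : CayleyEdge G X) : (g • e).base = g * e.base := rfl

@[simp]
theorem smul_label [Group G] (g : G) (e : CayleyEdge G X) : (g • e).label = e.label := rfl

theorem eq_one_of_smul_eq [Group G] {g : G} {e : CayleyEdge G X} (h : g • e = e) : g = 1 :=
  mul_eq_right.mp (congrArg base h)

/-- The endpoint of an edge in the Cayley graph of a free group. -/
def target (e : CayleyEdge (FreeGroup X) X) : FreeGroup X := e.base * FreeGroup.of e.label

theorem target_smul (g : FreeGroup X) (e : CayleyEdge (FreeGroup X) X) :
    (g • e).target = g * e.target := mul_assoc _ _ _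

theorem exists_linearOrder (X : Type*) : ∃ _ : LinearOrder (CayleyEdge (FreeGroup X) X),
    ∀ (g : FreeGroup X) (e f : CayleyEdge (FreeGroup X) X), e < f → g • e < g • f := by
  classical
  obtain ⟨P, hmul, hone, htot⟩ := exists_positive_cone (G := FreeGroup X)
  let r : CayleyEdge (FreeGroup X) X → CayleyEdge (FreeGroup X) X → Prop := fun e f =>
    e.base⁻¹ * f.base ∈ P ∨ (e.base = f.base ∧ WellOrderingRel e.label f.label)
  have hirr : Std.Irrefl r := ⟨fun e h => by
    rcases h with h | h
    · exact hone (inv_mul_cancel e.base ▸ h)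
    · exact irrefl _ h.2⟩
  have htrans : IsTrans _ r := ⟨fun e f g h h' => by
    rcases h with h | h <;> rcases h' with h' | h'
    · left
      have := hmul _ h _ h'
      rwa [mul_assoc, mul_inv_cancel_left] at this
    · left
      rwa [← h'.1]
    · left
      rwa [h.1]
    · exact Or.inr ⟨h.1.trans h'.1, _root_.trans h.2 h'.2⟩⟩
  have htri : Std.Trichotomous r := ⟨fun e f h h' => by
    simp only [r, not_or, not_and] at h h'
    by_cases hb : e.base = f.base
    · refine CayleyEdge.ext hb ?_
      rcases trichotomous_of WellOrderingRel e.label f.label with h1 | h1 | h1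
      · exact (h.2 hb h1).elim
      · exact h1
      · exact (h'.2 hb.symm h1).elim
    · rcases htot (e.base⁻¹ * f.base) (fun h => hb (inv_mul_eq_one.mp h)) with h1 | h1
      · exact (h.1 h1).elim
      · rw [mul_inv_rev, inv_inv] at h1
        exact (h'.1 h1).elim⟩
  have hsto : IsStrictTotalOrder _ r := { }
  refine ⟨linearOrderOfSTO r, fun g e f h => ?_⟩
  have h : r e f := h
  change r (g • e) (g • f)
  simpa [r, mul_assoc] using h

noncomputable instance : LinearOrder (CayleyEdge (FreeGroup X) X) := (exists_linearOrder X).choose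

theorem smul_lt_smul (g : FreeGroup X) (e f : CayleyEdge (FreeGroup X) X) (h : e < f) :
    g • e < g • f :=
  (exists_linearOrder X).choose_spec g e f h

theorem exists_finite_conn (u v : FreeGroup X) :
    ∃ T : Set (CayleyEdge (FreeGroup X) X), T.Finite ∧ Conn base target T u v := by
  suffices h : ∀ w u : FreeGroup X,
      ∃ T : Set (CayleyEdge (FreeGroup X) X), T.Finite ∧ Conn base target T u (u * w) by
    simpa using h (u⁻¹ * v) u
  intro w
  induction w using FreeGroup.induction_on with
  | C1 => exact fun u => ⟨∅, Set.finite_empty, by rw [mul_one]; exact Conn.refl _⟩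
  | of x =>
    exact fun u => ⟨{⟨u, x⟩}, Set.finite_singleton _,
      Conn.edge (s := base) (t := target) (Set.mem_singleton (⟨u, x⟩ : CayleyEdge _ X))⟩
  | inv_of x ih =>
    intro u
    obtain ⟨T, hT, h⟩ := ih (u * (FreeGroup.of x)⁻¹)
    refine ⟨T, hT, ?_⟩
    have h' := h.symm
    rwa [inv_mul_cancel_right] at h'
  | mul x y ihx ihy =>
    intro u
    obtain ⟨T, hT, h⟩ := ihx u
    obtain ⟨T', hT', h'⟩ := ihy (u * x)
    rw [mul_assoc] at h'
    exact ⟨T ∪ T', hT.union hT', (h.mono Set.subset_union_left).trans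
      (h'.mono Set.subset_union_right)⟩

theorem acyclic (X : Type*) : Acyclic (base : CayleyEdge (FreeGroup X) X → _) target := by
  intro c
  let σ : X → Equiv.Perm (FreeGroup X × ℚ) := fun x =>
    { toFun := fun p => (p.1 * FreeGroup.of x, p.2 + c ⟨p.1, x⟩)
      invFun := fun p => (p.1 * (FreeGroup.of x)⁻¹, p.2 - c ⟨p.1 * (FreeGroup.of x)⁻¹, x⟩)
      left_inv := fun p => by simp
      right_inv := fun p => by simp }
  let ρ : FreeGroup X →* (Equiv.Perm (FreeGroup X × ℚ))ᵐᵒᵖ :=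
    FreeGroup.lift fun x => MulOpposite.op (σ x)
  have hρ : ∀ w p, ((ρ w).unop p).1 = p.1 * w := by
    intro w
    induction w using FreeGroup.induction_on with
    | C1 => simp
    | of x => intro p; simp [ρ, σ]
    | inv_of x ih =>
      intro p
      rw [map_inv, MulOpposite.unop_inv, eq_mul_inv_iff_mul_eq, ← ih]
      simp
    | mul x y ihx ihy =>
      intro p
      rw [map_mul, MulOpposite.unop_mul, Equiv.Perm.mul_apply, ihy, ihx, mul_assoc]
  refine ⟨fun w => ((ρ w).unop (1, 0)).2, fun e => ?_⟩
  have h1 := hρ e.base (1, 0)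
  rw [one_mul] at h1
  simp only [target, map_mul, MulOpposite.unop_mul, Equiv.Perm.mul_apply]
  have : (ρ (FreeGroup.of e.label)).unop = σ e.label := by simp [ρ]
  rw [this]
  simp only [σ, Equiv.coe_fn_mk, h1]

end CayleyEdge

section OrbitMaps

variable {A B X Y : Type*} [Group A] [Group B] [MulAction A X] [MulAction B Y]

theorem orbitCount_le_of_injOn {U : Set X} {W : Set Y} (φ : X → Y) (hφ : ∀ x ∈ U, φ x ∈ W)
    (hinj : ∀ x ∈ U, ∀ y ∈ U, (∃ b : B, b • φ y = φ x) → ∃ a : A, a • y = x) :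
    orbitCount A U ≤ orbitCount B W := by
  rcases U.eq_empty_or_nonempty with rfl | ⟨x₀, -⟩
  · simp [orbitCount]
  have : Nonempty X := ⟨x₀⟩
  choose! σ hσU hσ using fun (q : MulAction.orbitRel.Quotient A X)
    (hq : q ∈ (fun x : X => (Quotient.mk'' x : MulAction.orbitRel.Quotient A X)) '' U) => hq
  refine Set.encard_le_encard_of_injOn (f := fun q => Quotient.mk'' (φ (σ q))) ?_ ?_
  · exact fun q hq => ⟨_, hφ _ (hσU q hq), rfl⟩
  · intro q hq q' hq' h
    rw [← hσ q hq, ← hσ q' hq']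
    exact mk_eq_mk_iff.mpr (hinj _ (hσU q hq) _ (hσU q' hq') (mk_eq_mk_iff.mp h))

theorem orbitCount_image {U : Set X} (φ : X → Y)
    (hφ : ∀ x ∈ U, ∀ y ∈ U, (∃ a : A, a • y = x) ↔ ∃ b : B, b • φ y = φ x) :
    orbitCount B (φ '' U) = orbitCount A U := by
  rcases U.eq_empty_or_nonempty with rfl | ⟨x₀, -⟩
  · simp [orbitCount]
  have : Nonempty X := ⟨x₀⟩
  refine le_antisymm (orbitCount_le_of_injOn (Function.invFunOn φ U)
    (fun y hy => Function.invFunOn_mem hy) ?_) (orbitCount_le_of_injOn φ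
      (fun x hx => Set.mem_image_of_mem φ hx) fun x hx y hy h => (hφ x hx y hy).mpr h)
  intro x hx y hy h
  have := (hφ _ (Function.invFunOn_mem hx) _ (Function.invFunOn_mem hy)).mp h
  rwa [Function.invFunOn_eq hx, Function.invFunOn_eq hy] at this

end OrbitMaps

section EssentialIn

variable {V E : Type*} [LinearOrder E] {s t : E → V}

/-- The edges of `D` whose endpoints are both joined to infinitely many vertices by paths through
smaller edges of `D`. -/
def essentialIn (s t : E → V) (D : Set E) : Set E :=
  {e ∈ D | (component s t (D ∩ Set.Iio e) (s e)).Infinite ∧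
    (component s t (D ∩ Set.Iio e) (t e)).Infinite}

theorem essentialIn_mono {D D' : Set E} (h : D ⊆ D') : essentialIn s t D ⊆ essentialIn s t D' :=
  fun _ he => ⟨h he.1, he.2.1.mono (component_mono (Set.inter_subset_inter_left _ h)),
    he.2.2.mono (component_mono (Set.inter_subset_inter_left _ h))⟩

variable {A : Type*} [Group A] [MulAction A V] [MulAction A E]

theorem smul_mem_essentialIn
    (hs : ∀ (a : A) e, s (a • e) = a • s e) (ht : ∀ (a : A) e, t (a • e) = a • t e)
    (hlt : ∀ (a : A) (e f : E), e < f → a • e < a • f)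
    {D : Set E} (hD : ∀ (a : A), ∀ e ∈ D, a • e ∈ D) (a : A) {e : E} (he : e ∈ essentialIn s t D) :
    a • e ∈ essentialIn s t D := by
  have key : ∀ v, (component s t (D ∩ Set.Iio e) v).Infinite →
      (component s t (D ∩ Set.Iio (a • e)) (a • v)).Infinite := fun v hv =>
    (hv.image (MulAction.injective a).injOn).mono <| Set.image_subset_iff.mpr fun w hw =>
      Conn.smul hs ht a (fun f hf => ⟨hD a f hf.1, hlt a f e hf.2⟩) hw
  refine ⟨hD a e he.1, ?_, ?_⟩
  · rw [hs]
    exact key _ he.2.1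
  · rw [ht]
    exact key _ he.2.2

theorem orbitCount_essentialIn
    (hs : ∀ (a : A) e, s (a • e) = a • s e) (ht : ∀ (a : A) e, t (a • e) = a • t e)
    (hlt : ∀ (a : A) (e f : E), e < f → a • e < a • f)
    (hfree : ∀ (a : A) (v : V), a • v = v → a = 1) (hacyc : Acyclic s t)
    {D : Set E} {W : Set V} (hD : ∀ (a : A), ∀ e ∈ D, a • e ∈ D)
    (hW : ∀ (a : A), ∀ v ∈ W, a • v ∈ W) (hDs : ∀ e ∈ D, s e ∈ W) (hDt : ∀ e ∈ D, t e ∈ W)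
    (hconn : ∀ u ∈ W, ∀ v ∈ W, Conn s t D u v) (hDfin : orbitCount A D ≠ ⊤)
    (hWfin : orbitCount A W ≠ ⊤) (hinf : W.Infinite) [FiniteDimensional ℚ (Additive A →+ ℚ)] :
    orbitCount A (essentialIn s t D) + 1 = Module.finrank ℚ (Additive A →+ ℚ) := by
  let D' : SubMulAction A E := ⟨D, fun a e he => hD a e he⟩
  let W' : SubMulAction A V := ⟨W, fun a v hv => hW a v hv⟩
  let s' : D' → W' := fun e => ⟨s e, hDs e e.2⟩
  let t' : D' → W' := fun e => ⟨t e, hDt e e.2⟩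
  have hs' : ∀ (a : A) e, s' (a • e) = a • s' e := fun a e => Subtype.ext (hs a e)
  have ht' : ∀ (a : A) e, t' (a • e) = a • t' e := fun a e => Subtype.ext (ht a e)
  have hlt' : ∀ (a : A) (e f : D'), e < f → a • e < a • f := fun a e f h => hlt a e f h
  have hfree' : ∀ (a : A) (v : W'), a • v = v → a = 1 := fun a v h =>
    hfree a v (congrArg Subtype.val h)
  have hacyc' : Acyclic s' t' :=
    hacyc.restrict Subtype.val Subtype.val Subtype.val_injective (fun _ => rfl) (fun _ => rfl)
  -- paths in `D` starting in `W` lift to the subgraph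
  have hlift : ∀ (C : Set E), C ⊆ D → ∀ {u v : V}, Conn s t C u v → ∀ (hu : u ∈ W),
      ∃ hv : v ∈ W, Conn s' t' (Subtype.val ⁻¹' C) ⟨u, hu⟩ ⟨v, hv⟩ := by
    intro C hC u v h hu
    refine component_subset (D := C) (W := {v | ∃ hv : v ∈ W,
      Conn s' t' (Subtype.val ⁻¹' C) ⟨u, hu⟩ ⟨v, hv⟩}) ⟨hu, Conn.refl _⟩ (fun e he => ?_) h
    have hedge : Conn s' t' (Subtype.val ⁻¹' C) (s' ⟨e, hC he⟩) (t' ⟨e, hC he⟩) :=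
      Conn.edge (f := (⟨e, hC he⟩ : D')) he
    exact ⟨fun h => ⟨hDt e (hC he), h.2.trans hedge⟩,
      fun h => ⟨hDs e (hC he), h.2.trans hedge.symm⟩⟩
  have hconn' : ∀ u v, Conn s' t' Set.univ u v := fun u v =>
    (hlift D subset_rfl (hconn u u.2 v v.2) u.2).2.mono (Set.subset_univ _)
  have hcomp : ∀ (e : D') (v : W'), component s t (D ∩ Set.Iio (e : E)) v =
      Subtype.val '' component s' t' (Set.Iio e) v := by
    intro e v
    ext w
    constructor
    · intro h
      obtain ⟨hw, h⟩ := hlift _ Set.inter_subset_left h v.2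
      exact ⟨⟨w, hw⟩, h.mono (fun f hf => hf.2), rfl⟩
    · rintro ⟨w, h, rfl⟩
      exact Conn.map (φ := Subtype.val) (ψ := Subtype.val) (fun _ _ => rfl) (fun _ _ => rfl)
        (fun f hf => ⟨f.2, hf⟩) h
  have hval : ∀ U : Set D', orbitCount A (Subtype.val '' U : Set E) = orbitCount A U := fun U =>
    orbitCount_image _ fun x _ y _ => exists_congr fun a => Subtype.ext_iff
  have hvalW : orbitCount A W = orbitCount A (Set.univ : Set W') := by
    rw [← orbitCount_image (A := A) (B := A) (Subtype.val : W' → V)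
      (fun x _ y _ => exists_congr fun a => Subtype.ext_iff), Set.image_univ, Subtype.range_val]
    rfl
  have hvalD : orbitCount A D = orbitCount A (Set.univ : Set D') := by
    rw [← hval, Set.image_univ, Subtype.range_val]
    rfl
  have hess : essentialIn s t D = Subtype.val '' {e : D' | IsEssential s' t' e} := by
    ext e
    constructor
    · rintro ⟨he, h1, h2⟩
      refine ⟨⟨e, he⟩, ⟨?_, ?_⟩, rfl⟩
      · exact Set.Infinite.of_image Subtype.val (hcomp ⟨e, he⟩ (s' ⟨e, he⟩) ▸ h1)
      · exact Set.Infinite.of_image Subtype.val (hcomp ⟨e, he⟩ (t' ⟨e, he⟩) ▸ h2)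
    · rintro ⟨e, ⟨h1, h2⟩, rfl⟩
      refine ⟨e.2, ?_, ?_⟩
      · exact hcomp e (s' e) ▸ h1.image Subtype.val_injective.injOn
      · exact hcomp e (t' e) ▸ h2.image Subtype.val_injective.injOn
  rw [hvalD, orbitCount_univ, ← Set.encard_univ, Set.encard_ne_top_iff,
    Set.finite_univ_iff] at hDfin
  rw [hvalW, orbitCount_univ, ← Set.encard_univ, Set.encard_ne_top_iff,
    Set.finite_univ_iff] at hWfin
  have : Infinite W' := hinf.to_subtype
  have h1 := orbitCount_not_isEssential hs' ht' hlt' hfree' hconn' hacyc'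
  have h2 := orbitCount_add_orbitCount_compl (A := A) (U := {e : D' | IsEssential s' t' e})
    fun a e he => IsEssential.smul hs' ht' hlt' a he
  have h3 := card_quotient_edges_add_one hs' ht' hfree' hconn' hacyc'
  rw [Set.compl_ofPred, h1, orbitCount_univ, orbitCount_univ, ENat.card_eq_coe_natCard,
    ENat.card_eq_coe_natCard] at h2
  rw [hess, hval]
  generalize orbitCount A {e : D' | IsEssential s' t' e} = n at *
  induction n using ENat.recTopCoe with
  | top => simp at h2
  | coe n =>
    norm_cast at h2 ⊢
    omega

end EssentialIn

section Betti

/-- The first rational Betti number of a group. -/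
noncomputable def betti (A : Type*) [Group A] : ℕ := Module.finrank ℚ (Additive A →+ ℚ)

/-- Evaluation of rational characters at a family of group elements. -/
def evalHom {A ι : Type*} [Group A] (g : ι → A) : (Additive A →+ ℚ) →ₗ[ℚ] (ι → ℚ) where
  toFun f i := f (Additive.ofMul (g i))
  map_add' _ _ := rfl
  map_smul' _ _ := rfl

theorem evalHom_injective {A ι : Type*} [Group A] {g : ι → A}
    (hg : Subgroup.closure (Set.range g) = ⊤) : Function.Injective (evalHom g) := by
  intro f f' h
  have : AddMonoidHom.toMultiplicativeRight f = AddMonoidHom.toMultiplicativeRight f' := by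
    refine MonoidHom.eq_of_eqOn_dense hg ?_
    rintro _ ⟨i, rfl⟩
    exact congrArg Multiplicative.ofAdd (congrFun h i)
  exact AddMonoidHom.toMultiplicativeRight.injective this

theorem closure_range_generators (A : Type*) [Group A] [IsFreeGroup A] :
    Subgroup.closure (Set.range (IsFreeGroup.of : IsFreeGroup.Generators A → A)) = ⊤ := by
  have h := congrArg (Subgroup.map (IsFreeGroup.toFreeGroup A).symm.toMonoidHom)
    (FreeGroup.closure_range_of (IsFreeGroup.Generators A))
  rw [MonoidHom.map_closure, ← Set.range_comp, Subgroup.map_top_of_surjective _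
    (IsFreeGroup.toFreeGroup A).symm.surjective] at h
  exact h

theorem evalHom_bijective {A : Type*} [Group A] [IsFreeGroup A] :
    Function.Bijective (evalHom (IsFreeGroup.of : IsFreeGroup.Generators A → A)) := by
  refine ⟨evalHom_injective ?_, fun c => ?_⟩
  · exact closure_range_generators A
  · refine ⟨AddMonoidHom.toMultiplicativeRight.symm
      (IsFreeGroup.lift fun i => Multiplicative.ofAdd (c i)), ?_⟩
    ext i
    simp [evalHom]

theorem betti_congr {A B : Type*} [Group A] [Group B] (e : A ≃* B) : betti A = betti B :=
  LinearEquiv.finrank_eq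
    { toFun := fun f => f.comp (MulEquiv.toAdditive e.symm).toAddMonoidHom
      invFun := fun f => f.comp (MulEquiv.toAdditive e).toAddMonoidHom
      map_add' := fun _ _ => rfl
      map_smul' := fun _ _ => rfl
      left_inv := fun f => by ext; simp
      right_inv := fun f => by ext; simp }

instance finiteDimensional_hom (A : Type*) [Group A] [Group.FG A] :
    FiniteDimensional ℚ (Additive A →+ ℚ) := by
  obtain ⟨s, hs⟩ := Group.fg_def.mp ‹Group.FG A›
  exact FiniteDimensional.of_injective (evalHom ((↑) : s → A))
    (evalHom_injective (by simpa using hs))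

theorem betti_le_card {A : Type*} [Group A] {s : Finset A}
    (hs : Subgroup.closure (s : Set A) = ⊤) : betti A ≤ s.card := by
  have := LinearMap.finrank_le_finrank_of_injective (f := evalHom ((↑) : s → A))
    (evalHom_injective (by simpa using hs))
  simpa [betti] using this

variable (K : Type*) [Group K] [IsFreeGroup K] [Group.FG K]

instance finite_generators : Finite (IsFreeGroup.Generators K) := by
  have : FiniteDimensional ℚ (IsFreeGroup.Generators K → ℚ) :=
    FiniteDimensional.of_surjective _ (evalHom_bijective (A := K)).2
  classical
  exact (Pi.linearIndependent_single_one (IsFreeGroup.Generators K) ℚ).finite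

theorem betti_eq_card : betti K = Nat.card (IsFreeGroup.Generators K) := by
  have := Fintype.ofFinite (IsFreeGroup.Generators K)
  rw [betti, (LinearEquiv.ofBijective _ (evalHom_bijective (A := K))).finrank_eq,
    Module.finrank_fintype_fun_eq_card, Nat.card_eq_fintype_card]

theorem grank_eq_betti : grank K = betti K := by
  classical
  have := Fintype.ofFinite (IsFreeGroup.Generators K)
  refine le_antisymm ?_ (le_sInf ?_)
  · have hle : (Finset.univ.image (IsFreeGroup.of : IsFreeGroup.Generators K → K)).card ≤
        betti K := by
      rw [betti_eq_card, Nat.card_eq_fintype_card]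
      exact Finset.card_image_le
    refine le_trans (sInf_le ⟨Finset.univ.image IsFreeGroup.of, ?_, rfl⟩) (Nat.cast_le.mpr hle)
    simpa using closure_range_generators K
  · rintro x ⟨s, hs, rfl⟩
    exact Nat.cast_le.mpr (betti_le_card hs)

end Betti

section Schreier

theorem schreier_freeGroup {Y : Type*} [Finite Y] (N : Subgroup (FreeGroup Y)) [N.FiniteIndex] :
    N.index * Nat.card Y + 1 = N.index + betti N := by
  have hfin : N.relIndex ⊤ ≠ 0 := by
    rw [Subgroup.relIndex_top_right]
    exact Subgroup.FiniteIndex.index_ne_zero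
  have hV := orbitCount_subgroup (X := FreeGroup Y) (N := N) (A := ⊤) le_top hfin
    (fun a p h => mul_eq_right.mp h) (U := Set.univ) (fun _ _ _ _ => trivial)
  have hE := orbitCount_subgroup (X := CayleyEdge (FreeGroup Y) Y) (N := N) (A := ⊤) le_top hfin
    (fun a p h => CayleyEdge.eq_one_of_smul_eq h) (U := Set.univ) (fun _ _ _ _ => trivial)
  have hV1 : orbitCount (⊤ : Subgroup (FreeGroup Y)) (Set.univ : Set (FreeGroup Y)) = 1 := by
    rw [orbitCount, Set.encard_eq_one]
    refine ⟨Quotient.mk'' 1, Set.eq_singleton_iff_unique_mem.mpr ⟨⟨1, trivial, rfl⟩, ?_⟩⟩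
    rintro _ ⟨g, -, rfl⟩
    exact mk_eq_mk_iff.mpr ⟨⟨g, trivial⟩, mul_one g⟩
  have hE1 : orbitCount (⊤ : Subgroup (FreeGroup Y))
      (Set.univ : Set (CayleyEdge (FreeGroup Y) Y)) = Nat.card Y := by
    rw [← ENat.card_eq_coe_natCard, ← Set.encard_univ, ← Function.Injective.encard_image
      (f := fun y : Y => (Quotient.mk'' (⟨1, y⟩ : CayleyEdge (FreeGroup Y) Y) :
        MulAction.orbitRel.Quotient (⊤ : Subgroup (FreeGroup Y)) (CayleyEdge (FreeGroup Y) Y)))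
      (fun y y' h => ?_)]
    · refine congrArg Set.encard (Set.Subset.antisymm ?_ ?_)
      · rintro _ ⟨e, -, rfl⟩
        exact ⟨e.label, trivial, mk_eq_mk_iff.mpr
          ⟨⟨e.base⁻¹, trivial⟩, CayleyEdge.ext (inv_mul_cancel e.base) rfl⟩⟩
      · rintro _ ⟨y, -, rfl⟩
        exact ⟨_, trivial, rfl⟩
    · obtain ⟨a, ha⟩ := mk_eq_mk_iff.mp h
      exact (congrArg CayleyEdge.label ha).symm
  rw [hV1, mul_one, orbitCount_univ, Subgroup.relIndex_top_right] at hV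
  rw [hE1, orbitCount_univ, Subgroup.relIndex_top_right] at hE
  have hVf : Finite (MulAction.orbitRel.Quotient N (FreeGroup Y)) := by
    rw [← ENat.card_lt_top, hV]
    exact ENat.natCast_lt_top _
  have hEf : Finite (MulAction.orbitRel.Quotient N (CayleyEdge (FreeGroup Y) Y)) := by
    rw [← ENat.card_lt_top, hE]
    exact_mod_cast ENat.natCast_lt_top _
  have : Group.FG N := inferInstance
  have h := card_quotient_edges_add_one (A := N) (V := FreeGroup Y)
    (E := CayleyEdge (FreeGroup Y) Y) (s := CayleyEdge.base) (t := CayleyEdge.target)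
    (fun _ _ => rfl) (fun a e => CayleyEdge.target_smul _ e)
    (fun a v h => Subtype.ext (mul_eq_right.mp h))
    (fun u v => by
      obtain ⟨T, -, h⟩ := CayleyEdge.exists_finite_conn u v
      exact h.mono (Set.subset_univ T)) (CayleyEdge.acyclic Y)
  rw [ENat.card_eq_coe_natCard] at hV hE
  norm_cast at hV hE
  rw [hV, hE] at h
  exact h

theorem betti_sub_one {K : Type*} [Group K] [IsFreeGroup K] [Group.FG K] (N : Subgroup K)
    [N.FiniteIndex] : betti N - 1 = N.index * (betti K - 1) := by
  let e := IsFreeGroup.toFreeGroup K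
  have hidx : (N.map (e : K →* FreeGroup (IsFreeGroup.Generators K))).index = N.index :=
    Subgroup.index_map_equiv N e
  have : (N.map (e : K →* FreeGroup (IsFreeGroup.Generators K))).FiniteIndex :=
    ⟨hidx ▸ Subgroup.FiniteIndex.index_ne_zero⟩
  have h := schreier_freeGroup (N.map (e : K →* FreeGroup (IsFreeGroup.Generators K)))
  rw [hidx, ← betti_congr (e.subgroupMap N), ← betti_eq_card] at h
  have : N.index ≠ 0 := Subgroup.FiniteIndex.index_ne_zero
  rcases Nat.eq_zero_or_pos (betti K) with h0 | h0
  · rw [h0] at h ⊢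
    simp
    omega
  · obtain ⟨k, hk⟩ := Nat.exists_eq_add_of_le' h0
    rw [hk] at h ⊢
    rw [Nat.mul_add] at h
    simp
    omega

end Schreier

open CayleyEdge

section EssentialEdges

variable {X : Type*}

/-- The set of translates of the edges in `T` by elements of `H`. -/
def translates (H : Subgroup (FreeGroup X)) (T : Set (CayleyEdge (FreeGroup X) X)) :
    Set (CayleyEdge (FreeGroup X) X) :=
  {e | ∃ h ∈ H, ∃ f ∈ T, h • f = e}

/-- The edges `e` of the Cayley graph such that, for some `H`-cocompact set of edges, both
endpoints of `e` are joined to infinitely many vertices by paths through edges of that set which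
are smaller than `e`. -/
def essentialEdges (H : Subgroup (FreeGroup X)) : Set (CayleyEdge (FreeGroup X) X) :=
  {e | ∃ T : Set (CayleyEdge (FreeGroup X) X), T.Finite ∧
    (component base target (translates H T ∩ Set.Iio e) e.base).Infinite ∧
    (component base target (translates H T ∩ Set.Iio e) e.target).Infinite}

theorem subset_translates (H : Subgroup (FreeGroup X)) (T : Set (CayleyEdge (FreeGroup X) X)) :
    T ⊆ translates H T := fun e he => ⟨1, one_mem H, e, he, one_smul _ e⟩

theorem smul_mem_translates {H : Subgroup (FreeGroup X)} {T : Set (CayleyEdge (FreeGroup X) X)}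
    {h : FreeGroup X} (hh : h ∈ H) {e : CayleyEdge (FreeGroup X) X} (he : e ∈ translates H T) :
    h • e ∈ translates H T := by
  obtain ⟨k, hk, f, hf, rfl⟩ := he
  exact ⟨h * k, mul_mem hh hk, f, hf, mul_smul h k f⟩

theorem translates_subset {H : Subgroup (FreeGroup X)} {T D : Set (CayleyEdge (FreeGroup X) X)}
    (hT : T ⊆ D) (hD : ∀ h ∈ H, ∀ e ∈ D, h • e ∈ D) : translates H T ⊆ D := by
  rintro _ ⟨h, hh, f, hf, rfl⟩
  exact hD h hh f (hT hf)

theorem translates_mono {H : Subgroup (FreeGroup X)} {T T' : Set (CayleyEdge (FreeGroup X) X)}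
    (h : T ⊆ T') : translates H T ⊆ translates H T' :=
  translates_subset (h.trans (subset_translates H T')) fun _ hh _ he => smul_mem_translates hh he

theorem smul_mem_essentialEdges {H H' : Subgroup (FreeGroup X)} {a : FreeGroup X}
    (ha : ∀ h ∈ H, a * h * a⁻¹ ∈ H') {e : CayleyEdge (FreeGroup X) X}
    (he : e ∈ essentialEdges H) : a • e ∈ essentialEdges H' := by
  obtain ⟨T, hT, h1, h2⟩ := he
  have key : ∀ v, (component base target (translates H T ∩ Set.Iio e) v).Infinite →
      (component base target (translates H' ((a • ·) '' T) ∩ Set.Iio (a • e))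
        (a * v)).Infinite := by
    intro v hv
    refine (hv.image (mul_right_injective a).injOn).mono ?_
    rintro _ ⟨w, hw, rfl⟩
    refine Conn.smul (A := FreeGroup X) (fun _ _ => rfl) (fun g e => target_smul g e) a ?_ hw
    rintro _ ⟨⟨h, hh, f, hf, rfl⟩, hlt⟩
    refine ⟨⟨a * h * a⁻¹, ha h hh, a • f, ⟨f, hf, rfl⟩, ?_⟩, CayleyEdge.smul_lt_smul a _ _ hlt⟩
    simp only [smul_smul, inv_mul_cancel_right]
  refine ⟨(a • ·) '' T, hT.image _, key _ h1, ?_⟩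
  rw [target_smul]
  exact key _ h2

theorem essentialEdges_eq_of_finite_relIndex {N H : Subgroup (FreeGroup X)} (hNH : N ≤ H)
    (hfin : N.relIndex H ≠ 0) : essentialEdges N = essentialEdges H := by
  refine Set.Subset.antisymm (fun e he => ?_) ?_
  · simpa using smul_mem_essentialEdges (a := 1) (H' := H) (fun h hh => by simpa using hNH hh) he
  · rintro e ⟨T, hT, h1, h2⟩
    have : Finite (H ⧸ N.subgroupOf H) := (Nat.finite_of_card_ne_zero hfin)
    have hsub : translates H T ⊆ translates N
        (⋃ q : H ⧸ N.subgroupOf H, ((q.out : FreeGroup X)⁻¹ • ·) '' T) := by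
      rintro _ ⟨h, hh, f, hf, rfl⟩
      obtain ⟨n, hn⟩ := QuotientGroup.mk_out_eq_mul (N.subgroupOf H) (⟨h, hh⟩⁻¹ : H)
      refine ⟨(n : H), Subgroup.mem_subgroupOf.mp n.2, _,
        Set.mem_iUnion.mpr ⟨((⟨h, hh⟩⁻¹ : H) : H ⧸ N.subgroupOf H), f, hf, rfl⟩, ?_⟩
      rw [hn]
      simp [smul_smul]
    exact ⟨_, Set.finite_iUnion fun q => hT.image _,
      h1.mono (component_mono (Set.inter_subset_inter_left _ hsub)),
      h2.mono (component_mono (Set.inter_subset_inter_left _ hsub))⟩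

theorem essentialEdges_bot : essentialEdges (⊥ : Subgroup (FreeGroup X)) = ∅ := by
  rw [Set.eq_empty_iff_forall_notMem]
  rintro e ⟨T, hT, h1, -⟩
  refine h1 ((((hT.image base).union (hT.image target)).insert e.base).subset
    (component_subset (Set.mem_insert _ _) ?_))
  rintro _ ⟨⟨h, hh, f, hf, rfl⟩, -⟩
  rw [Subgroup.mem_bot.mp hh, one_smul]
  exact iff_of_true (Or.inr (Or.inl ⟨f, hf, rfl⟩)) (Or.inr (Or.inr ⟨f, hf, rfl⟩))

theorem orbitCount_ne_top {A Y : Type*} [Group A] [MulAction A Y] {U T : Set Y} (hT : T.Finite)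
    (hU : ∀ u ∈ U, ∃ a : A, ∃ y ∈ T, a • y = u) : orbitCount A U ≠ ⊤ := by
  refine Set.encard_ne_top_iff.mpr ((hT.image fun y : Y =>
    (Quotient.mk'' y : MulAction.orbitRel.Quotient A Y)).subset ?_)
  rintro _ ⟨u, hu, rfl⟩
  obtain ⟨a, y, hy, rfl⟩ := hU u hu
  exact ⟨y, hy, mk_eq_mk_iff.mpr ⟨a⁻¹, inv_smul_smul a y⟩⟩

/-- Any finite set of edges lies in an `H`-invariant `H`-cocompact subtree. -/
theorem exists_subtree {H : Subgroup (FreeGroup X)} (hH : H.FG)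
    {T : Set (CayleyEdge (FreeGroup X) X)} (hT : T.Finite) :
    ∃ (D : Set (CayleyEdge (FreeGroup X) X)) (W : Set (FreeGroup X)), T ⊆ D ∧
      (∀ h ∈ H, ∀ e ∈ D, h • e ∈ D) ∧ (∀ h ∈ H, ∀ v ∈ W, h * v ∈ W) ∧
      (∀ e ∈ D, e.base ∈ W) ∧ (∀ e ∈ D, e.target ∈ W) ∧
      (∀ u ∈ W, ∀ v ∈ W, Conn base target D u v) ∧
      (∃ T', T'.Finite ∧ D ⊆ translates H T') ∧ orbitCount H W ≠ ⊤ ∧ 1 ∈ W := by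
  obtain ⟨Y, hY⟩ := hH
  choose p hpfin hp using fun v : FreeGroup X => exists_finite_conn 1 v
  let T₀ := T ∪ (⋃ y ∈ Y, p y) ∪ ⋃ f ∈ T, p f.base
  have hT₀ : T₀.Finite := (hT.union (Y.finite_toSet.biUnion fun y _ => hpfin y)).union
    (hT.biUnion fun f _ => hpfin _)
  let C := translates H T₀
  let W := component base target C 1
  have hsm : ∀ h ∈ H, ∀ {u v}, Conn base target C u v → Conn base target C (h * u) (h * v) :=
    fun h hh u v => Conn.smul (A := FreeGroup X) (fun _ _ => rfl) (fun g e => target_smul g e) h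
      fun e he => smul_mem_translates hh he
  have hHW : ∀ h ∈ H, Conn base target C 1 h := by
    intro h hh
    rw [← hY] at hh
    induction hh using Subgroup.closure_induction with
    | mem y hy =>
      refine (hp y).mono (Set.Subset.trans ?_ (subset_translates H T₀))
      exact fun f hf => Or.inl (Or.inr (Set.mem_biUnion hy hf))
    | one => exact Conn.refl _
    | mul x y hx hy ihx ihy =>
      refine ihx.trans ?_
      simpa using hsm x (hY ▸ hx) ihy
    | inv x hx ih =>
      simpa using (hsm x⁻¹ (inv_mem (hY ▸ hx)) ih).symm
  have hW : ∀ h ∈ H, ∀ v ∈ W, h * v ∈ W := fun h hh v hv =>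
    (hHW h hh).trans (by simpa using hsm h hh hv)
  refine ⟨{e ∈ C | e.base ∈ W}, W, fun e he => ⟨?_, ?_⟩, fun h hh e he => ⟨?_, ?_⟩, hW,
    fun e he => he.2, fun e he => (mem_component_iff he.1).mp he.2, ?_,
    ⟨T₀, hT₀, fun e he => he.1⟩, ?_, Conn.refl _⟩
  · exact subset_translates H T₀ (Or.inl (Or.inl he))
  · refine (hp e.base).mono (Set.Subset.trans ?_ (subset_translates H T₀))
    exact fun f hf => Or.inr (Set.mem_biUnion he hf)
  · exact smul_mem_translates hh he.1
  · exact hW h hh _ he.2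
  · have h1 : ∀ v ∈ W, Conn base target {e ∈ C | e.base ∈ W} 1 v := by
      intro v hv
      refine component_subset (D := C) (W := {v | v ∈ W ∧
        Conn base target {e ∈ C | e.base ∈ W} 1 v}) ⟨Conn.refl _, Conn.refl _⟩ ?_ hv |>.2
      intro e he
      have := mem_component_iff (s := base) (t := target) (v := 1) he
      have hedge (hb : e.base ∈ W) :
          Conn base target {e ∈ C | e.base ∈ W} e.base e.target :=
        Conn.edge (s := base) (t := target) (D := {e ∈ C | e.base ∈ W}) ⟨he, hb⟩
      exact ⟨fun h => ⟨this.mp h.1, h.2.trans (hedge h.1)⟩,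
        fun h => ⟨this.mpr h.1, h.2.trans (hedge (this.mpr h.1)).symm⟩⟩
    exact fun u hu v hv => (h1 u hu).symm.trans (h1 v hv)
  · refine orbitCount_ne_top (T := insert 1 (base '' T₀ ∪ target '' T₀))
      (((hT₀.image _).union (hT₀.image _)).insert _) ?_
    refine component_subset (D := C) (W := {u | ∃ a : H, ∃ y ∈ insert 1 (base '' T₀ ∪ target '' T₀),
      a • y = u}) ⟨1, 1, Or.inl rfl, one_smul _ _⟩ ?_
    rintro _ ⟨h, hh, f, hf, rfl⟩
    exact iff_of_true ⟨⟨h, hh⟩, f.base, Or.inr (Or.inl ⟨f, hf, rfl⟩), rfl⟩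
      ⟨⟨h, hh⟩, f.target, Or.inr (Or.inr ⟨f, hf, rfl⟩), (target_smul h f).symm⟩

theorem orbitCount_essentialEdges {H : Subgroup (FreeGroup X)} (hH : H.FG) :
    orbitCount H (essentialEdges H) = (betti H - 1 : ℕ) := by
  have : Group.FG H := (Group.fg_iff_subgroup_fg H).mpr hH
  rcases eq_or_ne H ⊥ with rfl | hne
  · have : betti (⊥ : Subgroup (FreeGroup X)) = 0 := by
      simpa using betti_le_card (A := (⊥ : Subgroup (FreeGroup X))) (s := ∅)
        (Subsingleton.elim _ _)
    simp [essentialEdges_bot, orbitCount, this]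
  have hHinf : (H : Set (FreeGroup X)).Infinite := by
    obtain ⟨h, hh, h1⟩ := (Subgroup.bot_or_exists_ne_one H).resolve_left hne
    have hinj := (injective_pow_iff_not_isOfFinOrder (x := h)).mpr fun hfin => h1 (by
      obtain ⟨n, hn, hpow⟩ := isOfFinOrder_iff_pow_eq_one.mp hfin
      exact (pow_eq_one_iff_left hn.ne').mp hpow)
    exact (Set.infinite_range_of_injective hinj).mono
      (Set.range_subset_iff.mpr fun n => pow_mem hh n)
  have hcount : ∀ {D : Set (CayleyEdge (FreeGroup X) X)} {W : Set (FreeGroup X)},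
      (∀ h ∈ H, ∀ e ∈ D, h • e ∈ D) → (∀ h ∈ H, ∀ v ∈ W, h * v ∈ W) →
      (∀ e ∈ D, e.base ∈ W) → (∀ e ∈ D, e.target ∈ W) →
      (∀ u ∈ W, ∀ v ∈ W, Conn base target D u v) →
      (∃ T', T'.Finite ∧ D ⊆ translates H T') → orbitCount H W ≠ ⊤ → 1 ∈ W →
      orbitCount H (essentialIn base target D) + 1 = betti H := by
    intro D W hD hW hs ht hconn ⟨T', hT', hDT'⟩ hWfin hone
    refine orbitCount_essentialIn (A := H) (fun _ _ => rfl) (fun a e => target_smul _ e)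
      (fun a e f h => CayleyEdge.smul_lt_smul _ e f h)
      (fun a v h => Subtype.ext (mul_eq_right.mp h)) (CayleyEdge.acyclic X)
      (fun a e he => hD a a.2 e he) (fun a v hv => hW a a.2 v hv) hs ht hconn
      (orbitCount_ne_top hT' fun e he => ?_) hWfin
      (hHinf.mono fun h hh => by simpa using hW h hh 1 hone)
    obtain ⟨h, hh, f, hf, rfl⟩ := hDT' he
    exact ⟨⟨h, hh⟩, f, hf, rfl⟩
  obtain ⟨D, W, -, hD, hW, hs, ht, hconn, ⟨T₁, hT₁, hDT₁⟩, hWfin, hone⟩ :=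
    exists_subtree hH Set.finite_empty
  have h1 := hcount hD hW hs ht hconn ⟨T₁, hT₁, hDT₁⟩ hWfin hone
  have hfin : orbitCount H (essentialIn base target D) ≠ ⊤ := fun h => by
    rw [h] at h1
    simp at h1
  have heq : essentialEdges H = essentialIn base target D := by
    refine Set.Subset.antisymm ?_ ?_
    · rintro e ⟨T, hT, he1, he2⟩
      obtain ⟨D', W', hTD', hD', hW', hs', ht', hconn', hfin', hWfin', hone'⟩ :=
        exists_subtree hH ((hT.union hT₁).insert e)
      have hsub : translates H (T ∪ T₁) ⊆ D' :=
        translates_subset ((Set.subset_insert _ _).trans hTD') hD'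
      have hDD' : D ⊆ D' := hDT₁.trans ((translates_mono Set.subset_union_right).trans hsub)
      have hTsub : translates H T ⊆ D' := (translates_mono Set.subset_union_left).trans hsub
      have h2 := hcount hD' hW' hs' ht' hconn' hfin' hWfin' hone'
      have hEE : essentialIn base target D = essentialIn base target D' := by
        refine eq_of_orbitCount_le (A := H) (fun a f hf => ?_) (essentialIn_mono hDD') ?_ hfin
        · exact smul_mem_essentialIn (A := H) (fun _ _ => rfl) (fun a e => target_smul _ e)
            (fun a e f h => CayleyEdge.smul_lt_smul _ e f h) (fun a e he => hD a a.2 e he) a hf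
        · exact (ENat.add_le_add_iff_right ENat.one_ne_top).mp (h2.trans h1.symm).le
      rw [hEE]
      exact ⟨hTD' (Set.mem_insert _ _),
        he1.mono (component_mono (Set.inter_subset_inter_left _ hTsub)),
        he2.mono (component_mono (Set.inter_subset_inter_left _ hTsub))⟩
    · rintro e ⟨he, he1, he2⟩
      exact ⟨T₁, hT₁, he1.mono (component_mono (Set.inter_subset_inter_left _ hDT₁)),
        he2.mono (component_mono (Set.inter_subset_inter_left _ hDT₁))⟩
  rw [heq]
  generalize orbitCount H (essentialIn base target D) = n at *
  induction n using ENat.recTopCoe with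
  | top => exact (hfin rfl).elim
  | coe n =>
    norm_cast at h1 ⊢
    omega

end EssentialEdges

section Ambient

variable {G X : Type*} [Group G] (ι : FreeGroup X →* G)

/-- The preimage of `A` under `w ↦ g * ι w * g⁻¹`. -/
def pull (A : Subgroup G) (g : G) : Subgroup (FreeGroup X) :=
  A.comap ((MulAut.conj g).toMonoidHom.comp ι)

theorem mem_pull {A : Subgroup G} {g : G} {w : FreeGroup X} :
    w ∈ pull ι A g ↔ g * ι w * g⁻¹ ∈ A := Iff.rfl

/-- The essential edges for `A` of the graph with vertex set `G` on which the basis of the free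
group acts by right multiplication through `ι`. -/
def ambientEdges (A : Subgroup G) : Set (CayleyEdge G X) :=
  {e | (⟨1, e.label⟩ : CayleyEdge (FreeGroup X) X) ∈ essentialEdges (pull ι A e.base)}

theorem smul_mem_ambientEdges {A A' : Subgroup G} {a : G} (ha : ∀ h ∈ A, a * h * a⁻¹ ∈ A')
    {e : CayleyEdge G X} (he : e ∈ ambientEdges ι A) : a • e ∈ ambientEdges ι A' := by
  have := smul_mem_essentialEdges (a := 1) (H' := pull ι A' (a * e.base)) (fun h hh => ?_) he
  · simpa [ambientEdges] using this
  · rw [mem_pull] at hh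
    have := ha _ hh
    rw [one_mul, inv_one, mul_one, mem_pull]
    simpa [mul_assoc] using this

theorem ambientEdges_mono {A A' : Subgroup G} (h : A ≤ A') :
    ambientEdges ι A ⊆ ambientEdges ι A' := fun e he => by
  simpa using smul_mem_ambientEdges ι (a := 1) (A' := A') (fun x hx => by simpa using h hx) he

theorem ambientEdges_eq_of_finite_relIndex {N A : Subgroup G} (hNA : N ≤ A)
    (hfin : N.relIndex A ≠ 0) : ambientEdges ι N = ambientEdges ι A := by
  ext e
  simp only [ambientEdges, Set.mem_ofPred_eq, pull]
  rw [essentialEdges_eq_of_finite_relIndex (Subgroup.comap_mono hNA)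
    (Subgroup.relIndex_comap_ne_zero _ hfin)]

theorem mk_mul_mem_ambientEdges_iff {A : Subgroup G} {g : G} {w : FreeGroup X} {x : X} :
    (⟨g * ι w, x⟩ : CayleyEdge G X) ∈ ambientEdges ι A ↔
      (⟨w, x⟩ : CayleyEdge (FreeGroup X) X) ∈ essentialEdges (pull ι A g) := by
  constructor
  · intro h
    have := smul_mem_essentialEdges (a := w) (H' := pull ι A g) (fun v hv => ?_) h
    · have e : w • (⟨1, x⟩ : CayleyEdge (FreeGroup X) X) = ⟨w, x⟩ :=
        CayleyEdge.ext (mul_one w) rfl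
      rwa [← e]
    · rw [mem_pull] at hv ⊢
      simpa [mul_assoc] using hv
  · intro h
    have := smul_mem_essentialEdges (a := w⁻¹) (H' := pull ι A (g * ι w)) (fun v hv => ?_) h
    · have e : w⁻¹ • (⟨w, x⟩ : CayleyEdge (FreeGroup X) X) = ⟨1, x⟩ :=
        CayleyEdge.ext (inv_mul_cancel w) rfl
      rwa [e] at this
    · rw [mem_pull] at hv ⊢
      simpa [mul_assoc] using hv

theorem orbitCount_ambientEdges_coset (N : Subgroup G) (g : G) :
    orbitCount N {e ∈ ambientEdges ι N | ∃ w, e.base = g * ι w} =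
      orbitCount (pull ι N g) (essentialEdges (pull ι N g)) := by
  rw [← orbitCount_image (B := N)
    (fun e : CayleyEdge (FreeGroup X) X => (⟨g * ι e.base, e.label⟩ : CayleyEdge G X))]
  · congr 1
    ext ⟨b, x⟩
    constructor
    · rintro ⟨h, w, rfl⟩
      exact ⟨⟨w, x⟩, (mk_mul_mem_ambientEdges_iff ι).mp h, rfl⟩
    · rintro ⟨⟨w, y⟩, h, he⟩
      rw [← he]
      exact ⟨(mk_mul_mem_ambientEdges_iff ι).mpr h, w, rfl⟩
  · rintro ⟨w, x⟩ - ⟨v, y⟩ -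
    constructor
    · rintro ⟨⟨a, ha⟩, h⟩
      refine ⟨⟨_, ha⟩, ?_⟩
      have h1 : a * v = w := congrArg base h
      have h2 : y = x := congrArg label h
      refine CayleyEdge.ext ?_ h2
      change (g * ι a * g⁻¹) * (g * ι v) = g * ι w
      rw [← h1, map_mul]
      group
    · rintro ⟨⟨b, hb⟩, h⟩
      have h1 : b * (g * ι v) = g * ι w := congrArg base h
      have h2 : y = x := congrArg label h
      refine ⟨⟨w * v⁻¹, ?_⟩, CayleyEdge.ext (inv_mul_cancel_right w v) h2⟩
      rw [mem_pull, map_mul, ← mul_assoc, ← h1, map_inv]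
      simpa [mul_assoc] using hb

/-- Conjugation identifies the preimages of `N` with `N` when `N` lies in all conjugates of the
range of `ι`. -/
noncomputable def pullEquiv (hι : Function.Injective ι) {N : Subgroup G}
    (hN : N ≤ ι.range.normalCore) (g : G) : pull ι N g ≃* N :=
  MulEquiv.ofBijective (((MulAut.conj g).toMonoidHom.comp ι).subgroupComap N) <| by
    constructor
    · intro a b h
      exact Subtype.ext (hι ((MulAut.conj g).injective (congrArg Subtype.val h)))
    · rintro ⟨n, hn⟩
      obtain ⟨w, hw⟩ := ι.range.normalCore_le
        (ι.range.normalCore_normal.conj_mem n (hN hn) g⁻¹)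
      have hw' : g * ι w * g⁻¹ = n := by
        rw [hw]
        group
      exact ⟨⟨w, by rwa [mem_pull, hw']⟩, Subtype.ext hw'⟩

theorem orbitCount_ambientEdges_of_le_normalCore (hι : Function.Injective ι)
    [ι.range.FiniteIndex] {N : Subgroup G} (hN : N ≤ ι.range.normalCore) [Group.FG N] :
    orbitCount N (ambientEdges ι N) = (ι.range.index * (betti N - 1) : ℕ) := by
  have hdecomp : ambientEdges ι N =
      ⋃ q : G ⧸ ι.range, {e ∈ ambientEdges ι N | ∃ w, e.base = q.out * ι w} := by
    ext e
    simp only [Set.mem_iUnion, Set.mem_ofPred_eq, exists_and_left, iff_self_and]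
    intro _
    obtain ⟨⟨_, w, rfl⟩, hw⟩ := QuotientGroup.mk_out_eq_mul ι.range e.base
    refine ⟨(e.base : G ⧸ ι.range), w⁻¹, ?_⟩
    rw [hw, map_inv, mul_inv_cancel_right]
  have hpiece : ∀ q : G ⧸ ι.range,
      orbitCount N {e ∈ ambientEdges ι N | ∃ w, e.base = q.out * ι w} = (betti N - 1 : ℕ) := by
    intro q
    have : Group.FG (pull ι N q.out) :=
      Group.fg_of_surjective (f := (pullEquiv ι hι hN q.out).symm.toMonoidHom)
        (pullEquiv ι hι hN q.out).symm.surjective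
    rw [orbitCount_ambientEdges_coset ι N,
      orbitCount_essentialEdges ((Group.fg_iff_subgroup_fg _).mp this),
      betti_congr (pullEquiv ι hι hN q.out)]
  rw [hdecomp, orbitCount, Set.image_iUnion, Set.encard_iUnion_of_finite]
  · refine (finsum_congr hpiece).trans ?_
    have := Fintype.ofFinite (G ⧸ ι.range)
    rw [finsum_eq_sum_of_fintype, Finset.sum_const, Finset.card_univ, ← Nat.card_eq_fintype_card,
      ← Subgroup.index, nsmul_eq_mul, Nat.cast_mul]
  · intro q q' hqq
    refine Set.disjoint_left.mpr ?_
    rintro _ ⟨e, ⟨-, w, hw⟩, rfl⟩ ⟨e', ⟨-, w', hw'⟩, h⟩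
    obtain ⟨⟨n, hn⟩, rfl⟩ := mk_eq_mk_iff.mp h
    refine hqq ?_
    have h1 : n * (q.out * ι w) = q'.out * ι w' := by rw [← hw, ← hw']; rfl
    obtain ⟨v, hv⟩ := ι.range.normalCore_le
      (ι.range.normalCore_normal.conj_mem n (hN hn) q.out⁻¹)
    rw [← QuotientGroup.out_eq' q, ← QuotientGroup.out_eq' q', QuotientGroup.eq]
    refine ⟨v * w * w'⁻¹, ?_⟩
    rw [map_mul, map_mul, hv, map_inv, eq_inv_mul_iff_mul_eq, eq_mul_inv_of_mul_eq h1.symm]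
    group

theorem toENNReal_orbitCount_ambientEdges (hι : Function.Injective ι) [ι.range.FiniteIndex]
    {A : Subgroup G} {r : ℝ≥0∞} (h : IsVirtRedRank A r) :
    ((orbitCount A (ambientEdges ι A) : ℕ∞) : ℝ≥0∞) = ι.range.index * r := by
  obtain ⟨K, hK, hfree, hfg, rfl⟩ := h
  let N' : Subgroup K := ι.range.normalCore.comap (A.subtype.comp K.subtype)
  let N : Subgroup G := (N'.map K.subtype).map A.subtype
  have hN' : N'.FiniteIndex := ⟨by
    have h := Subgroup.relIndex_comap_ne_zero (A.subtype.comp K.subtype)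
      (J := ι.range.normalCore) (K := ⊤)
      (by simpa using Subgroup.FiniteIndex.index_ne_zero (H := ι.range.normalCore))
    rwa [Subgroup.comap_top, Subgroup.relIndex_top_right] at h⟩
  have hNA : N ≤ A := Subgroup.map_subtype_le _
  have hrel : N.relIndex A = N'.index * K.index := by
    rw [← Subgroup.index_map_subtype, Subgroup.relIndex, Subgroup.subgroupOf,
      Subgroup.comap_map_eq_self_of_injective A.subtype_injective]
  have hrel0 : N.relIndex A ≠ 0 := by
    rw [hrel]
    exact mul_ne_zero hN'.index_ne_zero hK.index_ne_zero
  let e : N' ≃* N := (N'.equivMapOfInjective _ K.subtype_injective).trans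
    (Subgroup.equivMapOfInjective _ _ A.subtype_injective)
  have hfgN' : Group.FG N' := inferInstance
  have hfgN : Group.FG N := Group.fg_of_surjective (f := e.toMonoidHom) e.surjective
  have hcore : N ≤ ι.range.normalCore := by
    rintro _ ⟨_, ⟨k, hk, rfl⟩, rfl⟩
    exact hk
  have hcount := orbitCount_ambientEdges_of_le_normalCore ι hι hcore
  rw [ambientEdges_eq_of_finite_relIndex ι hNA hrel0,
    orbitCount_subgroup hNA hrel0 (fun _ _ => eq_one_of_smul_eq) (fun a ha x hx =>
      smul_mem_ambientEdges ι (fun h hh => mul_mem (mul_mem ha hh) (inv_mem ha)) hx),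
    ← betti_congr e, betti_sub_one, hrel] at hcount
  replace hcount := congrArg (fun n : ℕ∞ => (n : ℝ≥0∞)) hcount
  simp only [ENat.toENNReal_mul, ENat.toENNReal_coe, Nat.cast_mul] at hcount
  rw [grank_eq_betti, ← Nat.cast_one, ← ENNReal.natCast_sub, ← mul_div_assoc,
    ENNReal.eq_div_iff (by simpa using hK.index_ne_zero) (ENNReal.natCast_ne_top _)]
  refine (ENNReal.mul_right_inj (a := (N'.index : ℝ≥0∞)) (by simpa using hN'.index_ne_zero)
    (ENNReal.natCast_ne_top _)).mp ?_
  rw [← mul_assoc, hcount]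
  ring

/-- The orbits of the groups `A ∩ sBs⁻¹` inject into the pairs of an orbit of `A` and an orbit
of `B`. -/
theorem tsum_orbitCount_le (A B : Subgroup G) (S : Set G)
    (hS : ∀ g : G, ∃! s, s ∈ S ∧ ∃ a ∈ A, ∃ b ∈ B, g = a * s * b) :
    ∑' s : S, ((orbitCount ↥(A ⊓ B.map (MulAut.conj (s : G)).toMonoidHom)
        (ambientEdges ι (A ⊓ B.map (MulAut.conj (s : G)).toMonoidHom)) : ℕ∞) : ℝ≥0∞) ≤
      (orbitCount A (ambientEdges ι A) : ℕ∞) * (orbitCount B (ambientEdges ι B) : ℕ∞) := by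
  let C : S → Subgroup G := fun s => A ⊓ B.map (MulAut.conj (s : G)).toMonoidHom
  let orbits : ∀ A : Subgroup G, Set (MulAction.orbitRel.Quotient A (CayleyEdge G X)) := fun A =>
    (fun x => Quotient.mk'' x) '' ambientEdges ι A
  have hcard : ∀ A : Subgroup G, ((orbitCount A (ambientEdges ι A) : ℕ∞) : ℝ≥0∞) =
      ∑' _ : orbits A, 1 := fun A => (ENNReal.tsum_set_one (orbits A)).symm
  have hrep : ∀ A : Subgroup G, ∀ q : orbits A, ∃ e ∈ ambientEdges ι A, Quotient.mk'' e = q.1 :=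
    fun A q => q.2
  choose rep hrep hmk using hrep
  have hB : ∀ (s : S) (q : orbits (C s)), (s : G)⁻¹ • rep _ q ∈ ambientEdges ι B := by
    intro s q
    refine smul_mem_ambientEdges ι ?_ (hrep (C s) q)
    rintro _ ⟨-, b, hb, rfl⟩
    simpa [mul_assoc] using hb
  let Φ : (Σ s : S, orbits (C s)) → orbits A × orbits B := fun p =>
    (⟨Quotient.mk'' (rep _ p.2), _, ambientEdges_mono ι inf_le_left (hrep _ p.2), rfl⟩,
      ⟨Quotient.mk'' ((p.1 : G)⁻¹ • rep _ p.2), _, hB p.1 p.2, rfl⟩)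
  have hΦ : Function.Injective Φ := by
    rintro ⟨s, q⟩ ⟨s', q'⟩ h
    obtain ⟨⟨a, ha⟩, h1⟩ := mk_eq_mk_iff.mp (congrArg Subtype.val (congrArg Prod.fst h))
    obtain ⟨⟨b, hb⟩, h2⟩ := mk_eq_mk_iff.mp (congrArg Subtype.val (congrArg Prod.snd h))
    change a • rep _ q' = rep _ q at h1
    change b • (s' : G)⁻¹ • rep _ q' = (s : G)⁻¹ • rep _ q at h2
    have hab : a = s * b * (s' : G)⁻¹ := by
      have h3 : (a⁻¹ * (s * b * (s' : G)⁻¹)) • rep _ q' = rep _ q' := by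
        rw [mul_smul, mul_smul, mul_smul, h2, smul_inv_smul, ← h1, inv_smul_smul]
      exact inv_mul_eq_one.mp (eq_one_of_smul_eq h3)
    have hs : s = s' := by
      refine Subtype.ext ((hS s).unique ⟨s.2, 1, one_mem A, 1, one_mem B, by simp⟩
        ⟨s'.2, a, ha, b⁻¹, inv_mem hb, ?_⟩)
      rw [hab]
      group
    subst hs
    have hq : q = q' := by
      refine Subtype.ext ?_
      rw [← hmk, ← hmk]
      exact mk_eq_mk_iff.mpr ⟨⟨a, ha, b, hb, hab.symm⟩, h1⟩
    rw [hq]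
  calc _ = ∑' s : S, ∑' _ : orbits (C s), (1 : ℝ≥0∞) := tsum_congr fun s => hcard (C s)
    _ = ∑' p : Σ s : S, orbits (C s), (1 : ℝ≥0∞) := (ENNReal.tsum_sigma' fun _ => 1).symm
    _ ≤ ∑' p : orbits A × orbits B, (1 : ℝ≥0∞) :=
      ENNReal.tsum_comp_le_tsum_of_injective hΦ fun _ => 1
    _ = _ := by
      rw [hcard A, hcard B, ENNReal.tsum_prod', ← ENNReal.tsum_mul_right]
      simp only [one_mul]

end Ambient

end HannaNeumann

/-- Theorem on intersection of subgroups in virtually free groups: if `G` contains a free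
subgroup `F` of finite index, `A, B ≤ G`, and `S` is a system of representatives of the
double cosets `AsB` in `G`, then `∑_{s ∈ S} r̄k(A ∩ sBs⁻¹) ≤ [G:F] ⬝ r̄k(A) ⬝ r̄k(B)`. -/
theorem virtually_free_strengthened_hanna_neumann
    {G : Type*} [Group G] (F : Subgroup G) [IsFreeGroup F] [F.FiniteIndex]
    (A B : Subgroup G) (S : Set G)
    (hS : ∀ g : G, ∃! s, s ∈ S ∧ ∃ a ∈ A, ∃ b ∈ B, g = a * s * b)
    (rA rB : ℝ≥0∞) (hrA : IsVirtRedRank A rA) (hrB : IsVirtRedRank B rB)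
    (f : G → ℝ≥0∞)
    (hf : ∀ s ∈ S,
      IsVirtRedRank (↥(A ⊓ Subgroup.map (MulAut.conj s).toMonoidHom B)) (f s)) :
    ∑' s : S, f (s : G) ≤ (F.index : ℝ≥0∞) * rA * rB := by
  let ι := F.subtype.comp (IsFreeGroup.toFreeGroup F).symm.toMonoidHom
  have hι : Function.Injective ι :=
    F.subtype_injective.comp (IsFreeGroup.toFreeGroup F).symm.injective
  have hrange : ι.range = F := by
    rw [MonoidHom.range_comp, MonoidHom.range_eq_top.mpr
      (IsFreeGroup.toFreeGroup F).symm.surjective, ← MonoidHom.range_eq_map, F.range_subtype]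
  have hfin : ι.range.FiniteIndex := by
    rw [hrange]
    infer_instance
  have h := HannaNeumann.tsum_orbitCount_le ι A B S hS
  rw [HannaNeumann.toENNReal_orbitCount_ambientEdges ι hι hrA,
    HannaNeumann.toENNReal_orbitCount_ambientEdges ι hι hrB,
    tsum_congr fun s : S => HannaNeumann.toENNReal_orbitCount_ambientEdges ι hι (hf s s.2),
    ENNReal.tsum_mul_left, hrange, mul_assoc (F.index : ℝ≥0∞)] at h
  have h0 : (F.index : ℝ≥0∞) ≠ 0 := by simpa using Subgroup.FiniteIndex.index_ne_zero (H := F)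
  refine ((ENNReal.mul_le_mul_iff_right h0 (ENNReal.natCast_ne_top _)).mp h).trans (le_of_eq ?_)
  ring
end

section
/- (Orbit-intersection lemma.) Let a group G act freely on a set X, let A and B be subgroups of G, and let D be a system of representatives of the double cosets AdB in G (i.e., the map d ↦ AdB is a bijection from D onto the set of (A,B)-double cosets of G). Then ∑_{d∈D} |X/(d⁻¹Ad ∩ B)| ≤ |X/A| · |X/B| as cardinals, where X/H denotes the set of orbits of the action of a subgroup H ⩽ G on X. -/
/-- Two group elements that agree at one point of a free action are equal. -/
theorem eq_of_smul_eq_smul_of_free {G X : Type*} [Group G] [MulAction G X]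
    (hfree : ∀ (g : G) (x : X), g • x = x → g = 1) {g h : G} {x : X} (hx : g • x = h • x) :
    g = h := by
  have := hfree (h⁻¹ * g) x (by rw [mul_smul, hx, inv_smul_smul])
  exact (inv_mul_eq_one.mp this).symm

/-- The map `X/(d⁻¹Ad ∩ B) → X/A × X/B` sending the orbit of `x` to the pair of orbits of
`d • x` and `x`. -/
def orbitPair {G X : Type*} [Group G] [MulAction G X] (A B : Subgroup G) (d : G) :
    MulAction.orbitRel.Quotient ↥(Subgroup.map (MulAut.conj d⁻¹).toMonoidHom A ⊓ B) X →
      MulAction.orbitRel.Quotient A X × MulAction.orbitRel.Quotient B X :=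
  Quotient.lift (fun x => (Quotient.mk _ (d • x), Quotient.mk _ x)) <| by
    rintro _ y ⟨⟨h, ⟨a, ha, rfl⟩, hB⟩, rfl⟩
    refine Prod.ext (Quotient.sound ⟨⟨a, ha⟩, ?_⟩) (Quotient.sound ⟨⟨_, hB⟩, rfl⟩)
    change a • d • y = d • MulAut.conj d⁻¹ a • y
    simp [smul_smul, mul_assoc]

/-- The orbit-intersection lemma: if a group `G` acts freely on a set `X`, `A, B ≤ G`, and
`D` is a system of representatives of the double cosets `AdB` in `G`, then
`∑_{d ∈ D} |X/(d⁻¹Ad ∩ B)| ≤ |X/A| ⬝ |X/B|` as cardinals, where `X/H` is the set of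
`H`-orbits in `X`. -/
theorem orbit_intersection {G X : Type u} [Group G] [MulAction G X]
    (hfree : ∀ (g : G) (x : X), g • x = x → g = 1)
    (A B : Subgroup G) (D : Set G)
    (hD : ∀ g : G, ∃! d, d ∈ D ∧ ∃ a ∈ A, ∃ b ∈ B, g = a * d * b) :
    (Cardinal.sum fun d : D =>
        Cardinal.mk (MulAction.orbitRel.Quotient
          ↥(Subgroup.map (MulAut.conj (d : G)⁻¹).toMonoidHom A ⊓ B) X)) ≤
      Cardinal.mk (MulAction.orbitRel.Quotient A X) *
        Cardinal.mk (MulAction.orbitRel.Quotient B X) := by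
  rw [← Cardinal.mk_sigma, Cardinal.mul_def]
  refine Cardinal.mk_le_of_injective (f := fun p => orbitPair A B (p.1 : G) p.2) ?_
  rintro ⟨⟨d, hd⟩, p⟩ ⟨⟨e, he⟩, q⟩ hpq
  induction p using Quotient.inductionOn with | _ x
  induction q using Quotient.inductionOn with | _ y
  obtain ⟨⟨a, ha⟩, hax : a • e • y = d • x⟩ := Quotient.exact (congrArg Prod.fst hpq)
  obtain ⟨⟨b, hb⟩, rfl : b • y = x⟩ := Quotient.exact (congrArg Prod.snd hpq)
  have hab : a * e = d * b :=
    eq_of_smul_eq_smul_of_free hfree (x := y) (by rw [mul_smul, mul_smul, hax])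
  obtain rfl : d = e := (hD d).unique
    ⟨hd, 1, A.one_mem, 1, B.one_mem, by simp⟩
    ⟨he, a, ha, b⁻¹, B.inv_mem hb, by rw [hab, mul_inv_cancel_right]⟩
  have hbA : b ∈ Subgroup.map (MulAut.conj d⁻¹).toMonoidHom A :=
    ⟨a, ha, by simp [mul_assoc, hab]⟩
  exact congrArg (Sigma.mk _) (Quotient.sound ⟨⟨b, hbA, hb⟩, rfl⟩)
end

section
/- (Orbit-intersection lemma, relative version.) Let a group G act freely on a set X, let A and B be subgroups of G, and let D be a system of representatives of the double cosets AdB in G. Let Y ⊆ X be an A-invariant subset and Z ⊆ X be a B-invariant subset. Then ∑_{d∈D} |((d⁻¹·Y) ∩ Z)/(d⁻¹Ad ∩ B)| ≤ |Y/A| · |Z/B| as cardinals, where d⁻¹·Y = {d⁻¹·y : y ∈ Y} and W/H denotes the set of orbits of a subgroup H ⩽ G acting on an H-invariant set W. -/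
open scoped Pointwise

/-- The set of orbits of the action of a subgroup `H ≤ G` on an `H`-invariant subset
`W ⊆ X`: the quotient of `W` by the restriction of the `H`-orbit equivalence relation. -/
def orbitsIn {G X : Type u} [Group G] [MulAction G X] (H : Subgroup G) (W : Set X) :
    Type u :=
  Quotient (Setoid.comap (Subtype.val : W → X) (MulAction.orbitRel H X))

namespace orbitsIn

variable {G X : Type u} [Group G] [MulAction G X] {H : Subgroup G} {W : Set X}

/-- The `H`-orbit of a point of `W`. -/
def mk (H : Subgroup G) (x : W) : orbitsIn H W :=
  Quotient.mk _ x

theorem mk_eq_mk_iff {x y : W} : mk H x = mk H y ↔ ∃ h ∈ H, h • (y : X) = x := by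
  refine Quotient.eq.trans ?_
  rw [Setoid.comap_rel, MulAction.orbitRel_apply]
  exact ⟨fun ⟨h, e⟩ => ⟨h, h.2, e⟩, fun ⟨h, hh, e⟩ => ⟨⟨h, hh⟩, e⟩⟩

/-- A map between subsets that sends `H`-orbits into `K`-orbits induces a map of orbit sets. -/
def map {K : Subgroup G} {V : Set X} (f : W → V)
    (hf : ∀ x y : W, (∃ h ∈ H, h • (y : X) = x) → ∃ k ∈ K, k • (f y : X) = f x) :
    orbitsIn H W → orbitsIn K V :=
  Quotient.lift (fun x => mk K (f x)) fun x y h =>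
    mk_eq_mk_iff.2 (hf x y (mk_eq_mk_iff.1 (Quotient.sound h)))

end orbitsIn

theorem mem_map_conj_inv_iff {G : Type*} [Group G] {A : Subgroup G} {d g : G} :
    g ∈ Subgroup.map (MulAut.conj d⁻¹).toMonoidHom A ↔ d * g * d⁻¹ ∈ A := by
  constructor
  · rintro ⟨a, ha, rfl⟩
    simpa [mul_assoc] using ha
  · intro h
    exact ⟨_, h, by simp [mul_assoc]⟩

/-- The orbit-intersection lemma, relative version: if a group `G` acts freely on a set
`X`, `A, B ≤ G`, `D` is a system of representatives of the double cosets `AdB` in `G`,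
`Y ⊆ X` is `A`-invariant and `Z ⊆ X` is `B`-invariant, then
`∑_{d ∈ D} |((d⁻¹·Y) ∩ Z)/(d⁻¹Ad ∩ B)| ≤ |Y/A| ⬝ |Z/B|` as cardinals. -/
theorem orbit_intersection_relative {G X : Type u} [Group G] [MulAction G X]
    (hfree : ∀ (g : G) (x : X), g • x = x → g = 1)
    (A B : Subgroup G) (D : Set G)
    (hD : ∀ g : G, ∃! d, d ∈ D ∧ ∃ a ∈ A, ∃ b ∈ B, g = a * d * b)
    (Y Z : Set X)
    (hY : ∀ a ∈ A, ∀ y ∈ Y, a • y ∈ Y) (hZ : ∀ b ∈ B, ∀ z ∈ Z, b • z ∈ Z) :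
    (Cardinal.sum fun d : D =>
        Cardinal.mk (orbitsIn (Subgroup.map (MulAut.conj (d : G)⁻¹).toMonoidHom A ⊓ B)
          (((d : G)⁻¹ • Y) ∩ Z))) ≤
      Cardinal.mk (orbitsIn A Y) * Cardinal.mk (orbitsIn B Z) := by
  have hmem (d : G) (x : ↥((d⁻¹ • Y) ∩ Z)) : d • (x : X) ∈ Y :=
    Set.mem_inv_smul_set_iff.1 x.2.1
  let toY (d : D) : orbitsIn (Subgroup.map (MulAut.conj (d : G)⁻¹).toMonoidHom A ⊓ B)
      (((d : G)⁻¹ • Y) ∩ Z) → orbitsIn A Y :=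
    orbitsIn.map (fun x => ⟨(d : G) • (x : X), hmem d x⟩) fun x y ⟨h, hh, e⟩ =>
      ⟨d * h * (d : G)⁻¹, mem_map_conj_inv_iff.1 hh.1, by simp [mul_smul, e]⟩
  let toZ (d : D) : orbitsIn (Subgroup.map (MulAut.conj (d : G)⁻¹).toMonoidHom A ⊓ B)
      (((d : G)⁻¹ • Y) ∩ Z) → orbitsIn B Z :=
    orbitsIn.map (fun x => ⟨x, x.2.2⟩) fun x y ⟨h, hh, e⟩ => ⟨h, hh.2, e⟩
  rw [← Cardinal.mk_sigma, Cardinal.mul_def]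
  refine Cardinal.mk_le_of_injective
    (f := fun p => (⟨toY p.1 p.2, toZ p.1 p.2⟩ : orbitsIn A Y × orbitsIn B Z)) ?_
  rintro ⟨d, ⟨x⟩⟩ ⟨d', ⟨x'⟩⟩ hp
  obtain ⟨a, ha, hax⟩ := orbitsIn.mk_eq_mk_iff.1 (congrArg Prod.fst hp)
  obtain ⟨b, hb, hbx⟩ := orbitsIn.mk_eq_mk_iff.1 (congrArg Prod.snd hp)
  change a • (d' : G) • (x' : X) = (d : G) • (x : X) at hax
  change b • (x' : X) = x at hbx
  have hdb : a * d' = d * b := by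
    have hfix : ((d : G) * b)⁻¹ * (a * d') = 1 := by
      refine hfree _ (x' : X) ?_
      rw [mul_smul, mul_smul a, hax, ← hbx, ← mul_smul (d : G), inv_smul_smul]
    exact (inv_mul_eq_one.1 hfix).symm
  have hdd : d = d' := Subtype.ext <| (hD d).unique
    ⟨d.2, 1, A.one_mem, 1, B.one_mem, by simp⟩
    ⟨d'.2, a, ha, b⁻¹, B.inv_mem hb, by rw [hdb, mul_inv_cancel_right]⟩
  subst hdd
  refine congrArg (Sigma.mk d) (orbitsIn.mk_eq_mk_iff.2 ⟨b, ⟨mem_map_conj_inv_iff.2 ?_, hb⟩, hbx⟩)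
  rwa [← hdb, mul_inv_cancel_right]
end

section
/- Let G be the free product of a family of groups (G_i)_{i∈I} (the coproduct of groups, with each G_i regarded as a subgroup of G via the canonical embedding). Suppose at least two of the G_i are nontrivial, and suppose G is not the free product of exactly two groups of order 2 (i.e., G is not infinite dihedral). Then there exist elements x, y ∈ G generating a free subgroup of rank 2 such that the subgroup ⟨x, y⟩ intersects every conjugate gG_ig⁻¹ of every free factor trivially. -/
open Monoid CoprodI
open scoped commutatorElement

section CommutatorPingPong

variable {ι : Type*} {Gs : ι → Type*} [∀ i, Group (Gs i)]

open Classical in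
theorem Monoid.CoprodI.Word.toList_of_smul {i : ι} {a : Gs i} (ha : a ≠ 1) {w : Word Gs}
    (hw : w.fstIdx ≠ some i) : ((of a : CoprodI Gs) • w).toList = ⟨i, a⟩ :: w.toList := by
  rw [← Word.cons_eq_smul (h1 := hw) (h2 := ha)]
  rfl

open Classical in
theorem Monoid.CoprodI.Word.fstIdx_of_smul {i : ι} {a : Gs i} (ha : a ≠ 1) {w : Word Gs}
    (hw : w.fstIdx ≠ some i) : ((of a : CoprodI Gs) • w).fstIdx = some i := by
  simp [Word.fstIdx, Word.toList_of_smul ha hw]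

open Classical in
/-- Multiplying by `a⁻¹` a reduced word that does not start with `a` gives a word whose first
letter lies in the factor of `a`. -/
theorem Monoid.CoprodI.Word.fstIdx_of_inv_smul {i : ι} {a : Gs i} (ha : a ≠ 1) {w : Word Gs}
    (hw : w.toList.head? ≠ some ⟨i, a⟩) : ((of a : CoprodI Gs)⁻¹ • w).fstIdx = some i := by
  rw [← map_inv]
  by_cases h : w.fstIdx = some i
  · induction w using Word.consRecOn with
    | empty => simp [Word.fstIdx, Word.empty] at h
    | cons k m w' h1 h2 =>
      obtain rfl : k = i := by simpa using h
      rw [Word.cons_eq_smul, ← mul_smul, ← map_mul]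
      refine Word.fstIdx_of_smul ?_ h1
      rw [Ne, inv_mul_eq_one]
      rintro rfl
      exact hw rfl
  · exact Word.fstIdx_of_smul (inv_ne_one.mpr ha) h

open Classical in
/-- The commutator of letters `a`, `b` from different factors sends every reduced word that does
not start with `b a` to one that starts with `a b`. -/
theorem Monoid.CoprodI.Word.commutator_smul_startsWith {i j : ι} (hij : i ≠ j) {a : Gs i} {b : Gs j}
    (ha : a ≠ 1) (hb : b ≠ 1) {w : Word Gs}
    (hw : ¬ [(⟨j, b⟩ : Σ k, Gs k), ⟨i, a⟩] <+: w.toList) :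
    [(⟨i, a⟩ : Σ k, Gs k), ⟨j, b⟩] <+: (⁅(of a : CoprodI Gs), of b⁆ • w).toList := by
  have hhead : ((of b : CoprodI Gs)⁻¹ • w).toList.head? ≠ some ⟨i, a⟩ := by
    intro h
    apply hw
    have hidx : ((of b : CoprodI Gs)⁻¹ • w).fstIdx ≠ some j := by
      simpa [Word.fstIdx, h] using hij
    have hlist := Word.toList_of_smul hb hidx
    rw [smul_inv_smul] at hlist
    obtain ⟨l, hl⟩ := List.head?_eq_some_iff.mp h
    exact ⟨l, by simp [hlist, hl]⟩
  have h1 := Word.fstIdx_of_inv_smul ha hhead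
  have h2 : ((of a : CoprodI Gs)⁻¹ • (of b : CoprodI Gs)⁻¹ • w).fstIdx ≠ some j := by
    simpa [h1] using hij
  have h3 := Word.fstIdx_of_smul hb h2
  have h4 : ((of b : CoprodI Gs) • (of a : CoprodI Gs)⁻¹ • (of b : CoprodI Gs)⁻¹ • w).fstIdx ≠
      some i := by
    simpa [h3] using hij.symm
  rw [commutatorElement_def, mul_smul, mul_smul, mul_smul, Word.toList_of_smul ha h4,
    Word.toList_of_smul hb h2]
  exact ⟨_, rfl⟩

/-- The ping-pong lemma for two generators, in a group of arbitrary universe level. -/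
theorem FreeGroup.injective_lift_of_ping_pong_bool {G α : Type*} [Group G] [MulAction G α]
    (a : Bool → G) (X Y : Bool → Set α) (hXnonempty : ∀ t, (X t).Nonempty)
    (hXdisj : ∀ s t, s ≠ t → Disjoint (X s) (X t)) (hYdisj : ∀ s t, s ≠ t → Disjoint (Y s) (Y t))
    (hXYdisj : ∀ s t, Disjoint (X s) (Y t)) (hX : ∀ t, ∀ w ∉ Y t, a t • w ∈ X t)
    (hY : ∀ t, ∀ w ∉ X t, (a t)⁻¹ • w ∈ Y t) : Function.Injective (FreeGroup.lift a) := by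
  have key : Function.Injective (FreeGroup.lift (a ∘ ULift.down)) := by
    refine FreeGroup.injective_lift_of_ping_pong _ (X ∘ ULift.down) (Y ∘ ULift.down)
      (fun t => hXnonempty t.down)
      (fun s t hst => hXdisj _ _ (ULift.down_injective.ne hst))
      (fun s t hst => hYdisj _ _ (ULift.down_injective.ne hst))
      (fun s t => hXYdisj _ _) ?_ ?_
    · rintro t _ ⟨w, hw, rfl⟩
      exact hX t.down w hw
    · rintro t _ ⟨w, hw, rfl⟩
      exact hY t.down w hw
  have hcomp : FreeGroup.lift a =
      (FreeGroup.lift (a ∘ ULift.down)).comp (FreeGroup.map ULift.up) := by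
    ext t
    simp
  rw [hcomp, MonoidHom.coe_comp]
  exact key.comp (FreeGroup.map_injective ULift.up_injective)

theorem List.pair_unique_of_isPrefix {α : Type*} {a b c d : α} {l : List α} (h : [a, b] <+: l)
    (h' : [c, d] <+: l) : a = c ∧ b = d := by
  simpa using List.prefix_of_prefix_length_le h h' le_rfl |>.eq_of_length rfl

open Classical in
/-- If `a`, `a'` are distinct nontrivial letters and `b` is a nontrivial letter from a factor
containing neither of them, then `⁅a, b⁆` and `⁅a', b⁆` freely generate a free group. -/
theorem Monoid.CoprodI.lift_commutator_injective {i i' j : ι} (hij : i ≠ j) (hij' : i' ≠ j)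
    {a : Gs i} {a' : Gs i'} {b : Gs j} (ha : a ≠ 1) (ha' : a' ≠ 1) (hb : b ≠ 1)
    (haa' : (⟨i, a⟩ : Σ k, Gs k) ≠ ⟨i', a'⟩) :
    Function.Injective (FreeGroup.lift (fun t : Bool =>
      if t then ⁅(of a : CoprodI Gs), of b⁆ else ⁅(of a' : CoprodI Gs), of b⁆)) := by
  let p : Bool → Σ k, Gs k := fun t => if t then ⟨i, a⟩ else ⟨i', a'⟩
  have hp : ∀ t, (p t).2 ≠ 1 := by simp [p, ha, ha']
  have hpj : ∀ t, (p t).1 ≠ j := by simp [p, hij, hij']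
  have hpinj : Function.Injective p := by
    intro s t
    cases s <;> cases t <;> simp [p, haa', haa'.symm]
  let q : Σ k, Gs k := ⟨j, b⟩
  have hpq : ∀ t, p t ≠ q := fun t h => hpj t (congrArg Sigma.fst h)
  have hgen : (fun t : Bool =>
      if t then ⁅(of a : CoprodI Gs), of b⁆ else ⁅(of a' : CoprodI Gs), of b⁆) =
      fun t => ⁅(of (p t).2 : CoprodI Gs), of b⁆ := by
    funext t
    cases t <;> rfl
  rw [hgen]
  let X : Bool → Set (Word Gs) := fun t => {w | [p t, q] <+: w.toList}
  let Y : Bool → Set (Word Gs) := fun t => {w | [q, p t] <+: w.toList}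
  have hXY : ∀ s t, Disjoint (X s) (Y t) := fun s t =>
    Set.disjoint_left.mpr fun w h h' => hpq s (List.pair_unique_of_isPrefix h h').1
  refine FreeGroup.injective_lift_of_ping_pong_bool _ X Y ?_ ?_ ?_ hXY ?_ ?_
  · intro t
    refine ⟨⁅(of (p t).2 : CoprodI Gs), of b⁆ • Word.empty,
      Word.commutator_smul_startsWith (hpj t) (hp t) hb ?_⟩
    simp [Word.empty]
  · exact fun s t hst => Set.disjoint_left.mpr fun w h h' =>
      hst (hpinj (List.pair_unique_of_isPrefix h h').1)
  · exact fun s t hst => Set.disjoint_left.mpr fun w h h' =>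
      hst (hpinj (List.pair_unique_of_isPrefix h h').2)
  · intro t w hw
    exact Word.commutator_smul_startsWith (hpj t) (hp t) hb hw
  · intro t w hw
    rw [commutatorElement_inv]
    exact Word.commutator_smul_startsWith (hpj t).symm hb (hp t) hw

open Classical in
/-- A subgroup on which every projection to a factor is trivial meets all conjugates of the
factors trivially. -/
theorem Monoid.CoprodI.inf_conj_range_of_eq_bot {H : Subgroup (CoprodI Gs)} {i : ι}
    (hH : H ≤ (lift (Pi.mulSingle i (MonoidHom.id (Gs i))) : CoprodI Gs →* Gs i).ker)
    (g : CoprodI Gs) :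
    H ⊓ Subgroup.map (MulAut.conj g).toMonoidHom
      (MonoidHom.range (of : Gs i →* CoprodI Gs)) = ⊥ := by
  rw [eq_bot_iff]
  rintro _ ⟨h, _, ⟨m, rfl⟩, rfl⟩
  have hker := hH h
  have hm : m = 1 := by
    simpa [MonoidHom.mem_ker] using hker
  simp [hm]

open Classical in
theorem Monoid.CoprodI.commutator_mem_ker_lift_mulSingle {i j : ι} (hij : i ≠ j) (a : Gs i)
    (b : Gs j) (k : ι) :
    ⁅(of a : CoprodI Gs), of b⁆ ∈
      (lift (Pi.mulSingle k (MonoidHom.id (Gs k))) : CoprodI Gs →* Gs k).ker := by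
  rw [MonoidHom.mem_ker, map_commutatorElement, lift_of, lift_of]
  by_cases hk : i = k
  · subst hk
    simp [Pi.mulSingle_eq_of_ne hij.symm]
  · simp [Pi.mulSingle_eq_of_ne hk]

/-- Outside the infinite dihedral case there are two distinct nontrivial letters and a third
nontrivial one from a factor containing neither. -/
theorem exists_letters_of_not_dihedral
    (h2 : ∃ i j : ι, i ≠ j ∧ Nontrivial (Gs i) ∧ Nontrivial (Gs j))
    (hdih : ¬ ∃ i j : ι, i ≠ j ∧ Nat.card (Gs i) = 2 ∧ Nat.card (Gs j) = 2 ∧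
        ∀ k : ι, k ≠ i → k ≠ j → ∀ x : Gs k, x = 1) :
    ∃ p p' q : Σ k, Gs k, p.1 ≠ q.1 ∧ p'.1 ≠ q.1 ∧ p.2 ≠ 1 ∧ p'.2 ≠ 1 ∧ q.2 ≠ 1 ∧ p ≠ p' := by
  obtain ⟨i, j, hij, hi, hj⟩ := h2
  obtain ⟨a, ha⟩ := exists_ne (1 : Gs i)
  obtain ⟨b, hb⟩ := exists_ne (1 : Gs j)
  by_contra hcon
  push Not at hcon
  refine hdih ⟨i, j, hij, ?_, ?_, ?_⟩
  · refine Nat.card_eq_two_iff.mpr ⟨1, a, ha.symm, Set.eq_univ_of_forall fun c => ?_⟩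
    by_contra hc
    simp only [Set.mem_insert_iff, Set.mem_singleton_iff, not_or] at hc
    have := hcon ⟨i, c⟩ ⟨i, a⟩ ⟨j, b⟩ hij hij hc.1 ha hb
    exact hc.2 (by simpa using this)
  · refine Nat.card_eq_two_iff.mpr ⟨1, b, hb.symm, Set.eq_univ_of_forall fun c => ?_⟩
    by_contra hc
    simp only [Set.mem_insert_iff, Set.mem_singleton_iff, not_or] at hc
    have := hcon ⟨j, c⟩ ⟨j, b⟩ ⟨i, a⟩ hij.symm hij.symm hc.1 hb ha
    exact hc.2 (by simpa using this)
  · intro k hki hkj c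
    by_contra hc
    exact hki (congrArg Sigma.fst
      (hcon ⟨k, c⟩ ⟨i, a⟩ ⟨j, b⟩ hkj hij hc ha hb))

end CommutatorPingPong


/-- In a free product `G = ∗_{i ∈ I} G_i` with at least two nontrivial factors, which is
not the free product of exactly two groups of order 2 (i.e. not infinite dihedral), there
exist `x, y` generating a free subgroup of rank 2 which intersects every conjugate of
every free factor trivially. -/
theorem free_product_contains_free_subgroup_avoiding_factors
    {ι : Type*} (Gs : ι → Type*) [∀ i, Group (Gs i)]
    (h2 : ∃ i j : ι, i ≠ j ∧ Nontrivial (Gs i) ∧ Nontrivial (Gs j))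
    (hdih : ¬ ∃ i j : ι, i ≠ j ∧ Nat.card (Gs i) = 2 ∧ Nat.card (Gs j) = 2 ∧
        ∀ k : ι, k ≠ i → k ≠ j → ∀ x : Gs k, x = 1) :
    ∃ x y : Monoid.CoprodI Gs,
      Function.Injective (FreeGroup.lift (fun b : Bool => if b then x else y)) ∧
      ∀ (i : ι) (g : Monoid.CoprodI Gs),
        Subgroup.closure {x, y} ⊓
          Subgroup.map (MulAut.conj g).toMonoidHom
            (MonoidHom.range (Monoid.CoprodI.of : Gs i →* Monoid.CoprodI Gs)) = ⊥ := by
  obtain ⟨⟨i, a⟩, ⟨i', a'⟩, ⟨j, b⟩, hij, hij', ha, ha', hb, hne⟩ :=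
    exists_letters_of_not_dihedral h2 hdih
  refine ⟨⁅of a, of b⁆, ⁅of a', of b⁆, lift_commutator_injective hij hij' ha ha' hb hne,
    fun k g => inf_conj_range_of_eq_bot ?_ g⟩
  rw [Subgroup.closure_le]
  rintro _ (rfl | rfl)
  · exact commutator_mem_ker_lift_mulSingle hij a b k
  · exact commutator_mem_ker_lift_mulSingle hij' a' b k
end
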